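/- (Prolate spheroidal double layer potential, interior evaluation.) Fix a > 0, u₀ > 1, and integers n ≥ 0, 0 ≤ m ≤ n. Let the density be μ(s,t) = Y_n^m(s,t). Then for every interior target point x = Φ(u,v,φ) with 1 < u < u₀, v ∈ (−1,1), φ ∈ ℝ, the double layer potential satisfies D[μ](x) = ((n−m)!/(n+m)!)·(−1)^m·(u₀^2−1)·(Q_n^m)′(u₀)·P_n^m(u)·Y_n^m(v,φ). -/

import Mathlib

noncomputable section

open Real MeasureTheory

/-- Legendre polynomial via Rodrigues' formula. -/
def legendreP (n : ℕ) (x : ℝ) : ℝ :=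
  (1 / (2 ^ n * (n.factorial : ℝ))) * iteratedDeriv n (fun y : ℝ => (y ^ 2 - 1) ^ n) x

/-- Legendre function of the second kind (Neumann's integral), for `x > 1`. -/
def legendreQ (n : ℕ) (x : ℝ) : ℝ :=
  (1 / 2) * ∫ t in (-1 : ℝ)..1, legendreP n t / (x - t)

/-- Associated Legendre function of the first kind, off the cut (`x > 1`). -/
def assocP (n m : ℕ) (x : ℝ) : ℝ :=
  Real.sqrt (x ^ 2 - 1) ^ m * iteratedDeriv m (legendreP n) x

/-- Associated Legendre function of the second kind, off the cut (`x > 1`). -/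
def assocQ (n m : ℕ) (x : ℝ) : ℝ :=
  Real.sqrt (x ^ 2 - 1) ^ m * iteratedDeriv m (legendreQ n) x

/-- Ferrers function of the first kind, on the cut (`-1 ≤ v ≤ 1`). -/
def ferrersP (n m : ℕ) (v : ℝ) : ℝ :=
  Real.sqrt (1 - v ^ 2) ^ m * iteratedDeriv m (legendreP n) v

/-- Prolate spheroidal coordinate map. -/
def prolate (a u v φ : ℝ) : EuclideanSpace ℝ (Fin 3) :=
  (WithLp.equiv 2 (Fin 3 → ℝ)).symm
    ![a * Real.sqrt (u ^ 2 - 1) * Real.sqrt (1 - v ^ 2) * Real.cos φ,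
      a * Real.sqrt (u ^ 2 - 1) * Real.sqrt (1 - v ^ 2) * Real.sin φ,
      a * u * v]

/-- Surface spheroidal (= spherical) harmonic `Y_n^m(v, φ)`. -/
def sphY (n m : ℕ) (v φ : ℝ) : ℂ :=
  ((Real.sqrt ((2 * (n : ℝ) + 1) / (4 * Real.pi)) *
      Real.sqrt (((n - m).factorial : ℝ) / ((n + m).factorial : ℝ)) * ferrersP n m v : ℝ) : ℂ) *
    Complex.exp (Complex.I * m * φ)

/-- Outward unit normal on the prolate spheroid `u = u₀`, at surface parameters `(s, t)`. -/
def unitNormalP (a u₀ s t : ℝ) : EuclideanSpace ℝ (Fin 3) :=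
  ‖deriv (fun w => prolate a w s t) u₀‖⁻¹ • deriv (fun w => prolate a w s t) u₀

/-- Surface area element on the prolate spheroid `u = u₀`. -/
def areaElemP (a u₀ s : ℝ) : ℝ := a ^ 2 * Real.sqrt (u₀ ^ 2 - s ^ 2) * Real.sqrt (u₀ ^ 2 - 1)

/-- Laplace double layer potential on the prolate spheroid `u = u₀`. -/
def doubleLayerP (a u₀ : ℝ) (μ : ℝ → ℝ → ℂ) (x : EuclideanSpace ℝ (Fin 3)) : ℂ :=
  ∫ t in (0 : ℝ)..(2 * Real.pi), ∫ s in (-1 : ℝ)..1,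
    ((((inner ℝ (unitNormalP a u₀ s t) (x - prolate a u₀ s t) : ℝ) /
        (4 * Real.pi * ‖x - prolate a u₀ s t‖ ^ 3)) * areaElemP a u₀ s : ℝ) : ℂ) * μ s t

/-! Write `u₀ = cosh η`, `u = cosh e` and `v = cos b`. For a fixed target, let `g(η)` be the moment
of the Newton kernel over the spheroid `η` against `P_n^m(cos θ) cos(mτ)`, where `τ` is the azimuth
relative to the target; up to constants the double layer potential is the flux `sinh η · g'(η)`.
Harmonicity of the kernel and integration by parts in `θ` and `τ` show that `g` solves the radial
spheroidal equation away from `η = e`. Hence its Wronskians with the radial modes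
`P_n^m(cosh η)` and `Q_n^m(cosh η)` are constant on `η < e` and on `η > e`. The Wronskian with `P`
vanishes on `η < e`, by regularity at `η = 0`, and the one with `Q` vanishes on `η > e`, by decay at
infinity. Across `η = e` the Wronskian with `P` jumps by `4π P_n^m(cosh e) P_n^m(cos b)`:
subtracting that multiple of the case `n = m = 0`, which is Gauss's law, cancels the leading
singularity of the kernel, and what is left converges dominatedly as `η → e`. For `η > e` these are
two linear equations for `g` and its flux, whose determinant is the Wronskian of `P` and `Q`. -/

section IteratedDeriv

lemma hasDerivAt_iteratedDeriv {y : ℝ → ℝ} {U : Set ℝ} (hU : IsOpen U)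
    (hy : ∀ j, DifferentiableOn ℝ (iteratedDeriv j y) U) (j : ℕ) {x : ℝ} (hx : x ∈ U) :
    HasDerivAt (iteratedDeriv j y) (iteratedDeriv (j + 1) y x) x := by
  rw [iteratedDeriv_succ]
  exact ((hy j).differentiableAt (hU.mem_nhds hx)).hasDerivAt

lemma iteratedDeriv_eqOn_of_hasDerivAt {F : ℕ → ℝ → ℝ} {U : Set ℝ} (hU : IsOpen U)
    (hF : ∀ j, ∀ x ∈ U, HasDerivAt (F j) (F (j + 1) x) x) (j : ℕ) :
    Set.EqOn (iteratedDeriv j (F 0)) (F j) U := by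
  induction j with
  | zero => intro x _; rw [iteratedDeriv_zero]
  | succ j ih =>
    intro x hx
    rw [iteratedDeriv_succ, (ih.eventuallyEq_of_mem (hU.mem_nhds hx)).deriv_eq,
      (hF j x hx).deriv]

lemma iteratedDeriv_ultraspherical_ode {y : ℝ → ℝ} {U : Set ℝ} (hU : IsOpen U)
    (hy : ∀ j, DifferentiableOn ℝ (iteratedDeriv j y) U) {μ l : ℝ}
    (hode : ∀ x ∈ U, (x ^ 2 - 1) * iteratedDeriv 2 y x + 2 * (μ + 1) * x * iteratedDeriv 1 y x
      - l * y x = 0) (j : ℕ) :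
    ∀ x ∈ U, (x ^ 2 - 1) * iteratedDeriv (j + 2) y x
      + 2 * (μ + 1 + j) * x * iteratedDeriv (j + 1) y x
      - (l - j * (j + 1) - 2 * μ * j) * iteratedDeriv j y x = 0 := by
  induction j with
  | zero => intro x hx; simpa using hode x hx
  | succ j ih =>
    intro x hx
    have hD := fun i => hasDerivAt_iteratedDeriv hU hy i hx
    have hderiv := ((((hasDerivAt_id x).pow 2).sub_const 1).mul (hD (j + 2))).add
      (((hasDerivAt_id x).const_mul (2 * (μ + 1 + j))).mul (hD (j + 1))) |>.sub
      ((hD j).const_mul (l - j * (j + 1) - 2 * μ * j))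
    have hzero := hderiv.unique ((hasDerivAt_const x (0 : ℝ)).congr_of_eventuallyEq
      ((hU.eventually_mem hx).mono fun z hz => by simpa using ih z hz))
    simp only [id, Pi.pow_apply] at hzero
    push_cast at hzero ⊢
    linear_combination hzero

end IteratedDeriv

section LegendreP

open Polynomial

lemma iteratedDeriv_polynomial_eval (p : ℝ[X]) (j : ℕ) :
    iteratedDeriv j (fun x => p.eval x) = fun x => (derivative^[j] p).eval x := by
  induction j with
  | zero => simp
  | succ j ih => rw [iteratedDeriv_succ, ih, Function.iterate_succ_apply']; ext x; simp

/-- The Legendre polynomial `legendreP n` as an element of `ℝ[X]`. -/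
def legendrePoly (n : ℕ) : ℝ[X] :=
  C (1 / (2 ^ n * (n.factorial : ℝ))) * derivative^[n] ((X ^ 2 - 1) ^ n)

lemma legendreP_eq_eval (n : ℕ) : legendreP n = fun x => (legendrePoly n).eval x := by
  ext x
  have hpoly : (fun y : ℝ => (y ^ 2 - 1) ^ n) =
      fun y => (((X ^ 2 - 1) ^ n : ℝ[X])).eval y := by ext y; simp
  rw [legendreP, hpoly, iteratedDeriv_polynomial_eval, legendrePoly, eval_mul, eval_C]

lemma contDiff_iteratedDeriv_legendreP (n m : ℕ) {k : WithTop ℕ∞} :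
    ContDiff ℝ k (iteratedDeriv m (legendreP n)) := by
  rw [legendreP_eq_eval, iteratedDeriv_polynomial_eval]
  simpa using Polynomial.contDiff_aeval (𝕜 := ℝ) (derivative^[m] (legendrePoly n)) k

lemma hasDerivAt_iteratedDeriv_legendreP (n m : ℕ) (x : ℝ) :
    HasDerivAt (iteratedDeriv m (legendreP n)) (iteratedDeriv (m + 1) (legendreP n) x) x :=
  hasDerivAt_iteratedDeriv isOpen_univ
    (fun _ => ((contDiff_iteratedDeriv_legendreP n _).differentiable one_ne_zero).differentiableOn)
    m (Set.mem_univ x)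

lemma legendreP_one (n : ℕ) : legendreP n 1 = 1 := by
  have hfactor : ((X : ℝ[X]) ^ 2 - 1) ^ n = (X - C 1) ^ n * (X + 1) ^ n := by
    rw [← mul_pow]; congr 1; rw [C_1]; ring
  rw [legendreP_eq_eval]
  dsimp only [legendrePoly]
  rw [hfactor, eval_mul, iterate_derivative_mul, eval_finsetSum, Finset.sum_eq_single 0]
  · rw [Nat.sub_zero, iterate_derivative_X_sub_pow_self]
    simp only [eval_C, Nat.choose_zero_right, Function.iterate_zero, id, one_smul, eval_mul,
      eval_natCast, eval_pow, eval_add, eval_X, eval_one]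
    field_simp
    norm_num
  · intro i hi hi0
    have : n - (n - i) ≠ 0 := by have := Finset.mem_range.1 hi; omega
    rw [iterate_derivative_X_sub_pow]
    simp [this]
  · simp

lemma iteratedDeriv_legendreP_ode (n m : ℕ) (x : ℝ) :
    (x ^ 2 - 1) * iteratedDeriv (m + 2) (legendreP n) x
      + 2 * (m + 1) * x * iteratedDeriv (m + 1) (legendreP n) x
      - (n * (n + 1) - m * (m + 1)) * iteratedDeriv m (legendreP n) x = 0 := by
  set w : ℝ → ℝ := fun y => (y ^ 2 - 1) ^ n with hw
  have hw_smooth : ContDiff ℝ (⊤ : ℕ∞) w := by fun_prop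
  have hw_diff : ∀ j, DifferentiableOn ℝ (iteratedDeriv j w) Set.univ := fun j =>
    (hw_smooth.differentiable_iteratedDeriv j (by exact_mod_cast WithTop.coe_lt_top j)
      ).differentiableOn
  have hD := fun j y => hasDerivAt_iteratedDeriv isOpen_univ hw_diff j (Set.mem_univ y)
  have hfirst : ∀ y, (y ^ 2 - 1) * iteratedDeriv 1 w y = 2 * n * y * w y := by
    intro y
    have hw' : HasDerivAt w (n * (y ^ 2 - 1) ^ (n - 1) * (2 * y)) y := by
      simpa using (((hasDerivAt_id y).fun_pow 2).sub_const 1).fun_pow n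
    rw [iteratedDeriv_one, hw'.deriv]
    cases n with
    | zero => simp
    | succ k => simp only [hw, Nat.add_sub_cancel]; ring
  have hsecond : ∀ y ∈ Set.univ, (y ^ 2 - 1) * iteratedDeriv 2 w y
      + 2 * (-n + 1) * y * iteratedDeriv 1 w y - 2 * n * w y = 0 := by
    intro y _
    have hlhs := (((hasDerivAt_id y).fun_pow 2).sub_const 1).fun_mul (hD 1 y)
    have hrhs := ((hasDerivAt_id y).const_mul (2 * (n : ℝ))).fun_mul (hD 0 y)
    simp only [id, iteratedDeriv_zero, hfirst] at hlhs hrhs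
    have := hlhs.unique hrhs
    rw [Nat.cast_ofNat] at this
    linear_combination this
  have hP : ∀ j, iteratedDeriv j (legendreP n) x
      = 1 / (2 ^ n * (n.factorial : ℝ)) * iteratedDeriv (n + j) w x := by
    intro j
    have hfun : legendreP n = fun y => 1 / (2 ^ n * (n.factorial : ℝ)) * iteratedDeriv n w y := rfl
    rw [hfun, iteratedDeriv_const_mul_field]
    simp only [iteratedDeriv_eq_iterate, ← Function.iterate_add_apply, add_comm n j]
  have := iteratedDeriv_ultraspherical_ode isOpen_univ hw_diff hsecond (n + m) x (Set.mem_univ x)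
  push_cast [hP, add_assoc] at this ⊢
  linear_combination 1 / (2 ^ n * (n.factorial : ℝ)) * this

end LegendreP

section CauchyIntegral

lemma hasDerivAt_setIntegral_of_isCompact {α : Type*} [TopologicalSpace α] [MeasurableSpace α]
    [OpensMeasurableSpace α] [T2Space α] {μ : Measure α} [IsFiniteMeasureOnCompacts μ]
    {K : Set α} (hK : IsCompact K) {U : Set ℝ} (hU : IsOpen U)
    {F F' : ℝ → α → ℝ} (hF : ∀ x ∈ U, ContinuousOn (F x) K)
    (hF' : ContinuousOn (Function.uncurry F') (U ×ˢ K))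
    (hderiv : ∀ x ∈ U, ∀ z ∈ K, HasDerivAt (fun y => F y z) (F' x z) x) {x₀ : ℝ} (hx₀ : x₀ ∈ U) :
    HasDerivAt (fun x => ∫ z in K, F x z ∂μ) (∫ z in K, F' x₀ z ∂μ) x₀ := by
  have hKm := hK.measurableSet
  obtain ⟨ε, hε, hball⟩ := Metric.nhds_basis_closedBall.mem_iff.1 (hU.mem_nhds hx₀)
  obtain ⟨C, hC⟩ := ((isCompact_closedBall x₀ ε).prod hK).exists_bound_of_continuousOn
    (hF'.mono (Set.prod_mono_left hball))
  have hF'₀ : ContinuousOn (F' x₀) K :=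
    hF'.comp (f := fun z => (x₀, z)) (by fun_prop) fun z hz => ⟨hx₀, hz⟩
  refine (hasDerivAt_integral_of_dominated_loc_of_deriv_le (bound := fun _ => C)
    (Metric.closedBall_mem_nhds x₀ hε) ?_ ((hF x₀ hx₀).integrableOn_compact hK)
    (hF'₀.aestronglyMeasurable_of_isCompact hK hKm) ?_
    (continuousOn_const.integrableOn_compact hK) ?_).2
  · filter_upwards [hU.mem_nhds hx₀] with x hx
    exact (hF x hx).aestronglyMeasurable_of_isCompact hK hKm
  · exact (ae_restrict_iff' hKm).2 (.of_forall fun z hz x hx => hC (x, z) ⟨hx, hz⟩)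
  · exact (ae_restrict_iff' hKm).2 (.of_forall fun z hz x hx => hderiv x (hball hx) z hz)

/-- The Cauchy-type integral `∫_{-1}^{1} f(t) / (x - t)^(j+1) dt`, whose case `j = 0`, `f = P_n` is
`2 Q_n(x)`. -/
def cauchyIntegral (f : ℝ → ℝ) (j : ℕ) (x : ℝ) : ℝ :=
  ∫ t in Set.Icc (-1 : ℝ) 1, f t / (x - t) ^ (j + 1)

variable {f : ℝ → ℝ} {x : ℝ}

lemma continuousOn_div_sub_pow (hf : ContinuousOn f (Set.Icc (-1) 1)) (hx : 1 < x) (j : ℕ) :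
    ContinuousOn (fun t => f t / (x - t) ^ j) (Set.Icc (-1) 1) :=
  hf.div (by fun_prop) fun _ ht => pow_ne_zero _ (sub_pos.2 (ht.2.trans_lt hx)).ne'

lemma integrableOn_div_sub_pow (hf : ContinuousOn f (Set.Icc (-1) 1)) (hx : 1 < x) (j : ℕ) :
    IntegrableOn (fun t => f t / (x - t) ^ j) (Set.Icc (-1) 1) :=
  (continuousOn_div_sub_pow hf hx j).integrableOn_compact isCompact_Icc

lemma hasDerivAt_cauchyIntegral (hf : ContinuousOn f (Set.Icc (-1) 1)) (j : ℕ) (hx : 1 < x) :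
    HasDerivAt (cauchyIntegral f j) (-(j + 1) * cauchyIntegral f (j + 1) x) x := by
  rw [cauchyIntegral, ← integral_const_mul]
  refine hasDerivAt_setIntegral_of_isCompact
    (F' := fun x t => -((j : ℝ) + 1) * (f t / (x - t) ^ (j + 2)))
    isCompact_Icc (isOpen_Ioi (a := (1 : ℝ)))
    (fun y hy => continuousOn_div_sub_pow hf hy _) ?_ ?_ hx
  · refine continuousOn_const.mul ((hf.comp continuousOn_snd fun z hz => hz.2).div (by fun_prop) ?_)
    exact fun z hz => pow_ne_zero _ (sub_pos.2 (hz.2.2.trans_lt hz.1)).ne'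
  · intro y hy t ht
    have hne : y - t ≠ 0 := (sub_pos.2 (ht.2.trans_lt hy)).ne'
    have hpow := ((hasDerivAt_id y).sub_const t).fun_pow (j + 1)
    refine ((hasDerivAt_const y (f t)).fun_div hpow (pow_ne_zero _ hne)).congr_deriv ?_
    simp only [id]
    push_cast
    field_simp
    ring

lemma abs_cauchyIntegral_mul_pow_le (hf : ContinuousOn f (Set.Icc (-1) 1)) (j : ℕ) :
    ∃ C, ∀ x : ℝ, 2 ≤ x → |cauchyIntegral f j x| * x ^ (j + 1) ≤ C := by
  obtain ⟨C, hC⟩ := isCompact_Icc.exists_bound_of_continuousOn hf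
  refine ⟨C * 2 ^ (j + 1) * 2, fun x hx => ?_⟩
  have hC0 : 0 ≤ C := (norm_nonneg _).trans (hC 0 (by norm_num))
  have hnorm : ‖cauchyIntegral f j x‖ ≤ C / (x / 2) ^ (j + 1) * volume.real (Set.Icc (-1 : ℝ) 1) :=
    norm_setIntegral_le_of_norm_le_const (by simp) fun t ht => by
      have hhalf : x / 2 ≤ x - t := by linarith [ht.2]
      rw [norm_div, norm_pow, Real.norm_eq_abs (x - t), abs_of_pos (by linarith)]
      exact div_le_div₀ hC0 (hC t ht) (by positivity) (by gcongr)
  rw [Real.volume_real_Icc_of_le (by norm_num), Real.norm_eq_abs] at hnorm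
  rw [← le_div_iff₀ (by positivity)]
  refine hnorm.trans_eq ?_
  rw [div_pow]
  field_simp
  norm_num

end CauchyIntegral

section LegendreQ

lemma continuous_iteratedDeriv_legendreP (n m : ℕ) : Continuous (iteratedDeriv m (legendreP n)) :=
  (contDiff_iteratedDeriv_legendreP n m (k := 0)).continuous

lemma continuousOn_legendreP (n : ℕ) (s : Set ℝ) : ContinuousOn (legendreP n) s :=
  (continuous_iteratedDeriv_legendreP n 0).continuousOn

lemma legendreQ_eq_cauchyIntegral (n : ℕ) :
    legendreQ n = fun x => 1 / 2 * cauchyIntegral (legendreP n) 0 x := by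
  ext x
  rw [legendreQ, cauchyIntegral, intervalIntegral.integral_of_le (by norm_num),
    integral_Icc_eq_integral_Ioc]
  simp only [zero_add, pow_one]

lemma iteratedDeriv_legendreQ (n j : ℕ) : Set.EqOn (iteratedDeriv j (legendreQ n))
    (fun x => 1 / 2 * ((-1) ^ j * j.factorial * cauchyIntegral (legendreP n) j x)) (Set.Ioi 1) := by
  have hzero : legendreQ n = fun x => 1 / 2 *
      ((-1) ^ 0 * (Nat.factorial 0 : ℝ) * cauchyIntegral (legendreP n) 0 x) := by
    simpa using legendreQ_eq_cauchyIntegral n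
  rw [hzero]
  refine iteratedDeriv_eqOn_of_hasDerivAt (F := fun j x => 1 / 2 *
    ((-1) ^ j * (j.factorial : ℝ) * cauchyIntegral (legendreP n) j x)) isOpen_Ioi
    (fun i x hx => ?_) j
  refine (((hasDerivAt_cauchyIntegral (continuousOn_legendreP n _) i hx).const_mul
    ((-1) ^ i * (i.factorial : ℝ))).const_mul (1 / 2)).congr_deriv ?_
  rw [Nat.factorial_succ]
  push_cast
  ring

lemma differentiableOn_iteratedDeriv_legendreQ (n j : ℕ) :
    DifferentiableOn ℝ (iteratedDeriv j (legendreQ n)) (Set.Ioi 1) := by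
  refine DifferentiableOn.congr (fun x hx => ?_) (iteratedDeriv_legendreQ n j)
  exact (((hasDerivAt_cauchyIntegral (continuousOn_legendreP n _) j hx).const_mul _).const_mul
    _).differentiableAt.differentiableWithinAt

lemma hasDerivAt_iteratedDeriv_legendreQ (n m : ℕ) {x : ℝ} (hx : 1 < x) :
    HasDerivAt (iteratedDeriv m (legendreQ n)) (iteratedDeriv (m + 1) (legendreQ n) x) x :=
  hasDerivAt_iteratedDeriv isOpen_Ioi (differentiableOn_iteratedDeriv_legendreQ n) m hx

lemma abs_iteratedDeriv_legendreQ_mul_pow_le (n m : ℕ) :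
    ∃ C, ∀ x : ℝ, 2 ≤ x → |iteratedDeriv m (legendreQ n) x| * x ^ (m + 1) ≤ C := by
  obtain ⟨C, hC⟩ := abs_cauchyIntegral_mul_pow_le (continuousOn_legendreP n _) m
  refine ⟨1 / 2 * (m.factorial * C), fun x hx => ?_⟩
  rw [iteratedDeriv_legendreQ n m (show (1 : ℝ) < x by linarith)]
  simp only [abs_mul, abs_pow, abs_neg, abs_one, one_pow, one_mul, mul_assoc, Nat.abs_cast,
    abs_of_pos (by norm_num : (0 : ℝ) < 1 / 2)]
  gcongr
  exact hC x hx

lemma hasDerivAt_legendre_kernel (n : ℕ) {x t : ℝ} (hxt : x - t ≠ 0) :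
    HasDerivAt
      (fun t => (t ^ 2 - 1) * (legendreP n t / (x - t) ^ 2
        - iteratedDeriv 1 (legendreP n) t / (x - t)))
      (2 * (x ^ 2 - 1) * (legendreP n t / (x - t) ^ 3) - 2 * x * (legendreP n t / (x - t) ^ 2)
        - n * (n + 1) * (legendreP n t / (x - t) ^ 1)) t := by
  have hsub : HasDerivAt (fun t : ℝ => x - t) (-1) t := by
    simpa using (hasDerivAt_id t).const_sub x
  have hP := hasDerivAt_iteratedDeriv_legendreP n
  have hode := iteratedDeriv_legendreP_ode n 0 t
  refine (((hasDerivAt_id t).fun_pow 2).sub_const 1 |>.fun_mul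
    (((hP 0 t).fun_div (hsub.fun_pow 2) (pow_ne_zero 2 hxt)).fun_sub
      ((hP 1 t).fun_div hsub hxt))).congr_deriv ?_
  simp only [id, iteratedDeriv_zero, Nat.cast_zero, zero_add] at hode ⊢
  field_simp
  push_cast
  linear_combination -(x - t) ^ 3 * hode

lemma legendreQ_ode (n : ℕ) {x : ℝ} (hx : 1 < x) :
    (x ^ 2 - 1) * iteratedDeriv 2 (legendreQ n) x + 2 * x * iteratedDeriv 1 (legendreQ n) x
      - n * (n + 1) * legendreQ n x = 0 := by
  have hint := integrableOn_div_sub_pow (continuousOn_legendreP n _) hx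
  have hFTC := intervalIntegral.integral_eq_sub_of_hasDerivAt (a := -1) (b := 1)
    (fun t ht => hasDerivAt_legendre_kernel n (x := x) (t := t) ?_) ?_
  · rw [intervalIntegral.integral_of_le (by norm_num), ← integral_Icc_eq_integral_Ioc,
      integral_sub (((hint 3).const_mul _).sub' ((hint 2).const_mul _)) ((hint 1).const_mul _),
      integral_sub ((hint 3).const_mul _) ((hint 2).const_mul _)] at hFTC
    simp only [integral_const_mul] at hFTC
    have hQ := fun j => iteratedDeriv_legendreQ n j hx
    rw [hQ 2, hQ 1, ← congrFun (iteratedDeriv_zero (f := legendreQ n)) x, hQ 0]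
    simp only [cauchyIntegral, Nat.factorial]
    norm_num at hFTC ⊢
    linear_combination 1 / 2 * hFTC
  · rw [Set.uIcc_of_le (by norm_num)] at ht
    linarith [ht.2]
  · rw [intervalIntegrable_iff_integrableOn_Icc_of_le (by norm_num)]
    exact (((hint 3).const_mul _).sub ((hint 2).const_mul _)).sub ((hint 1).const_mul _)

lemma iteratedDeriv_legendreQ_ode (n m : ℕ) {x : ℝ} (hx : 1 < x) :
    (x ^ 2 - 1) * iteratedDeriv (m + 2) (legendreQ n) x
      + 2 * (m + 1) * x * iteratedDeriv (m + 1) (legendreQ n) x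
      - (n * (n + 1) - m * (m + 1)) * iteratedDeriv m (legendreQ n) x = 0 := by
  have := iteratedDeriv_ultraspherical_ode (μ := 0) (l := n * (n + 1)) isOpen_Ioi
    (differentiableOn_iteratedDeriv_legendreQ n)
    (fun y hy => by simpa using legendreQ_ode n hy) m x hx
  linear_combination this

end LegendreQ

section LegendreWronskian

open Polynomial Filter Topology

lemma cauchyIntegral_const (a : ℝ) {x : ℝ} (hx : 1 < x) :
    cauchyIntegral (fun _ => a) 0 x = a * log ((x + 1) / (x - 1)) := by
  have hderiv : ∀ t ∈ Set.uIcc (-1 : ℝ) 1,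
      HasDerivAt (fun t => -a * log (x - t)) (a / (x - t) ^ (0 + 1)) t := by
    intro t ht
    rw [Set.uIcc_of_le (by norm_num)] at ht
    have hne : x - t ≠ 0 := (sub_pos.2 (ht.2.trans_lt hx)).ne'
    refine ((((hasDerivAt_id t).const_sub x).log hne).const_mul (-a)).congr_deriv ?_
    simp only [id, zero_add, pow_one]
    field_simp
  rw [cauchyIntegral, integral_Icc_eq_integral_Ioc,
    ← intervalIntegral.integral_of_le (by norm_num),
    intervalIntegral.integral_eq_sub_of_hasDerivAt hderiv,
    log_div (by linarith) (by linarith), sub_neg_eq_add]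
  · ring
  · rw [intervalIntegrable_iff_integrableOn_Icc_of_le (by norm_num)]
    exact integrableOn_div_sub_pow continuousOn_const hx _

lemma cauchyIntegral_add {f g : ℝ → ℝ} (hf : ContinuousOn f (Set.Icc (-1) 1))
    (hg : ContinuousOn g (Set.Icc (-1) 1)) (j : ℕ) {x : ℝ} (hx : 1 < x) :
    cauchyIntegral (fun t => f t + g t) j x = cauchyIntegral f j x + cauchyIntegral g j x := by
  simp only [cauchyIntegral, add_div]
  exact integral_add (integrableOn_div_sub_pow hf hx _) (integrableOn_div_sub_pow hg hx _)

lemma cauchyIntegral_mul_id {f : ℝ → ℝ} (hf : ContinuousOn f (Set.Icc (-1) 1)) {x : ℝ}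
    (hx : 1 < x) : cauchyIntegral (fun t => f t * t) 0 x
      = cauchyIntegral f 0 x * x - ∫ t in Set.Icc (-1 : ℝ) 1, f t := by
  rw [cauchyIntegral, cauchyIntegral, ← integral_mul_const,
    ← integral_sub ((integrableOn_div_sub_pow hf hx _).mul_const x)
      (hf.integrableOn_compact isCompact_Icc)]
  refine setIntegral_congr_fun measurableSet_Icc fun t ht => ?_
  have hne : x - t ≠ 0 := (sub_pos.2 (ht.2.trans_lt hx)).ne'
  field_simp
  ring

-- Division by `x - t` isolates the logarithmic singularity at `x = 1`.
lemma exists_cauchyIntegral_polynomial_eq (p : ℝ[X]) : ∃ r : ℝ[X], ∀ x : ℝ, 1 < x →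
    cauchyIntegral (fun t => p.eval t) 0 x = p.eval x * log ((x + 1) / (x - 1)) - r.eval x := by
  induction p using Polynomial.induction_on with
  | C a => exact ⟨0, fun x hx => by simpa using cauchyIntegral_const a hx⟩
  | add p q hp hq =>
    obtain ⟨r, hr⟩ := hp
    obtain ⟨s, hs⟩ := hq
    refine ⟨r + s, fun x hx => ?_⟩
    simp only [eval_add]
    rw [cauchyIntegral_add p.continuousOn q.continuousOn 0 hx, hr x hx, hs x hx]
    ring
  | monomial k a ih =>
    obtain ⟨r, hr⟩ := ih
    refine ⟨r * X + C (∫ t in Set.Icc (-1 : ℝ) 1, (C a * X ^ k : ℝ[X]).eval t), fun x hx => ?_⟩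
    simp only [pow_succ, ← mul_assoc (C a), eval_mul_X]
    rw [cauchyIntegral_mul_id (C a * X ^ k).continuousOn hx, hr x hx, eval_add, eval_mul_X, eval_C]
    ring

/-- The normalised Wronskian `(x² - 1)^(m+1) W(P_n^{(m)}, Q_n^{(m)})`, which is constant on
`(1, ∞)`. -/
def legendreWronskian (n m : ℕ) (x : ℝ) : ℝ :=
  (x ^ 2 - 1) ^ (m + 1) *
    (iteratedDeriv m (legendreP n) x * iteratedDeriv (m + 1) (legendreQ n) x
      - iteratedDeriv m (legendreQ n) x * iteratedDeriv (m + 1) (legendreP n) x)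

lemma legendreWronskian_zero_eq_const (n : ℕ) :
    ∃ c, ∀ x : ℝ, 1 < x → legendreWronskian n 0 x = c := by
  have hderiv : ∀ x ∈ Set.Ioi (1 : ℝ), HasDerivAt (legendreWronskian n 0) 0 x := by
    intro x hx
    have hP := fun j => hasDerivAt_iteratedDeriv_legendreP n j x
    have hQ := fun j => hasDerivAt_iteratedDeriv_legendreQ n j hx
    have hPode := iteratedDeriv_legendreP_ode n 0 x
    have hQode := iteratedDeriv_legendreQ_ode n 0 hx
    refine (((((hasDerivAt_id x).fun_pow 2).sub_const 1).fun_pow 1).fun_mul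
      (((hP 0).fun_mul (hQ 1)).fun_sub ((hQ 0).fun_mul (hP 1)))).congr_deriv ?_
    simp only [id] at hPode hQode ⊢
    norm_num [-iteratedDeriv_one] at hPode hQode ⊢
    linear_combination legendreP n x * hQode - legendreQ n x * hPode
  exact isOpen_Ioi.exists_is_const_of_deriv_eq_zero isPreconnected_Ioi
    (fun x hx => (hderiv x hx).differentiableAt.differentiableWithinAt)
    (fun x hx => (hderiv x hx).deriv)

lemma exists_legendreWronskian_zero_eq (n : ℕ) : ∃ r : ℝ[X], ∀ x : ℝ, 1 < x →
    legendreWronskian n 0 x = -legendreP n x ^ 2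
      + (x ^ 2 - 1) * ((r.eval x * iteratedDeriv 1 (legendreP n) x
        - (derivative r).eval x * legendreP n x) / 2) := by
  obtain ⟨r, hr⟩ := exists_cauchyIntegral_polynomial_eq (legendrePoly n)
  refine ⟨r, fun x hx => ?_⟩
  have hQ : Set.EqOn (legendreQ n)
      (fun y => 1 / 2 * (legendreP n y * log ((y + 1) / (y - 1)) - r.eval y)) (Set.Ioi 1) :=
    fun y hy => by
      rw [legendreQ_eq_cauchyIntegral]
      simp only [legendreP_eq_eval, hr y hy]
  have hne : x - 1 ≠ 0 := by linarith
  have hne' : x + 1 ≠ 0 := by linarith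
  have hlog := (((hasDerivAt_id x).add_const 1).fun_div ((hasDerivAt_id x).sub_const 1) hne).log
    (div_ne_zero hne' hne)
  have hQ' := (((hasDerivAt_iteratedDeriv_legendreP n 0 x).fun_mul hlog).fun_sub
    (r.hasDerivAt x)).const_mul (1 / 2) |>.congr_of_eventuallyEq
      (hQ.eventuallyEq_of_mem (isOpen_Ioi.mem_nhds hx))
  have hQ'' := (hasDerivAt_iteratedDeriv_legendreQ n 0 hx).unique hQ'
  simp only [id, zero_add, iteratedDeriv_zero] at hQ''
  simp only [legendreWronskian, zero_add, iteratedDeriv_zero]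
  rw [hQ'', hQ hx]
  field_simp
  ring

lemma legendreWronskian_zero (n : ℕ) {x : ℝ} (hx : 1 < x) : legendreWronskian n 0 x = -1 := by
  obtain ⟨c, hc⟩ := legendreWronskian_zero_eq_const n
  obtain ⟨r, hr⟩ := exists_legendreWronskian_zero_eq n
  have hcont : Continuous fun x : ℝ => -legendreP n x ^ 2
      + (x ^ 2 - 1) * ((r.eval x * iteratedDeriv 1 (legendreP n) x
        - (derivative r).eval x * legendreP n x) / 2) := by
    have hP := continuous_iteratedDeriv_legendreP n
    have hP0 : Continuous (legendreP n) := hP 0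
    have hP1 := hP 1
    fun_prop
  have hlim := (hcont.tendsto 1).mono_left (nhdsWithin_le_nhds (s := Set.Ioi 1))
  have hlim_const := hlim.congr' (f₂ := fun _ => c)
    (eventually_mem_nhdsWithin.mono fun y hy => by rw [← hr y hy, hc y hy])
  rw [hc x hx, tendsto_nhds_unique tendsto_const_nhds hlim_const, legendreP_one]
  norm_num

lemma legendreWronskian_succ (n m : ℕ) {x : ℝ} (hx : 1 < x) :
    legendreWronskian n (m + 1) x = -(n * (n + 1) - m * (m + 1)) * legendreWronskian n m x := by
  have hP := iteratedDeriv_legendreP_ode n m x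
  have hQ := iteratedDeriv_legendreQ_ode n m hx
  simp only [legendreWronskian, pow_succ _ (m + 1)]
  linear_combination (x ^ 2 - 1) ^ (m + 1) * (iteratedDeriv (m + 1) (legendreP n) x * hQ
    - iteratedDeriv (m + 1) (legendreQ n) x * hP)

lemma legendreWronskian_mul_factorial {n m : ℕ} (hm : m ≤ n) {x : ℝ} (hx : 1 < x) :
    legendreWronskian n m x * (n - m).factorial = -(-1) ^ m * (n + m).factorial := by
  induction m with
  | zero => simp [legendreWronskian_zero n hx]
  | succ m ih =>
    have ih := ih (Nat.le_of_succ_le hm)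
    obtain ⟨k, rfl⟩ := Nat.exists_eq_add_of_le hm
    rw [show m + 1 + k - m = k + 1 by omega, Nat.factorial_succ] at ih
    rw [legendreWronskian_succ _ _ hx, show m + 1 + k - (m + 1) = k by omega,
      show m + 1 + k + (m + 1) = (m + 1 + k + m) + 1 by omega, Nat.factorial_succ]
    push_cast at ih ⊢
    linear_combination -((m : ℝ) + 1 + k + m + 1) * ih

end LegendreWronskian

section SpheroidalModes

section

variable {s c y₀ y₁ y₂ : ℝ → ℝ} {σ x : ℝ}

lemma exists_hasDerivAt_pow_mul_comp (hs : HasDerivAt s (c x) x) (hc : HasDerivAt c (σ * s x) x)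
    (hy : HasDerivAt y₀ (y₁ (c x)) (c x)) (m : ℕ) :
    ∃ d, HasDerivAt (fun t => s t ^ m * y₀ (c t)) d x ∧
      s x * d = m * c x * s x ^ m * y₀ (c x) + σ * s x ^ (m + 2) * y₁ (c x) := by
  refine ⟨_, (hs.fun_pow m).fun_mul (HasDerivAt.comp x hy hc), ?_⟩
  cases m with
  | zero => simp; ring
  | succ m => simp only [Nat.add_sub_cancel]; push_cast; ring

lemma exists_hasDerivAt_flux (hs : HasDerivAt s (c x) x) (hc : HasDerivAt c (σ * s x) x)
    (hy : HasDerivAt y₀ (y₁ (c x)) (c x)) (hy₁ : HasDerivAt y₁ (y₂ (c x)) (c x)) (m : ℕ) (N : ℝ)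
    (hsq : c x ^ 2 = 1 + σ * s x ^ 2)
    (hode : (c x ^ 2 - 1) * y₂ (c x) + 2 * (m + 1) * c x * y₁ (c x)
      - (N - m * (m + 1)) * y₀ (c x) = 0) :
    ∃ d, HasDerivAt (fun t => m * c t * (s t ^ m * y₀ (c t)) + σ * (s t ^ (m + 2) * y₁ (c t))) d x ∧
      s x * d = (m ^ 2 + σ * N * s x ^ 2) * (s x ^ m * y₀ (c x)) := by
  obtain ⟨d₀, hd₀, h₀⟩ := exists_hasDerivAt_pow_mul_comp hs hc hy m
  obtain ⟨d₁, hd₁, h₁⟩ := exists_hasDerivAt_pow_mul_comp hs hc hy₁ (m + 2)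
  refine ⟨_, ((hc.const_mul (m : ℝ)).fun_mul hd₀).fun_add (hd₁.const_mul σ), ?_⟩
  push_cast at h₁
  linear_combination (m * c x) * h₀ + σ * h₁ + σ * s x ^ (m + 2) * hode
    + (m ^ 2 * s x ^ m * y₀ (c x) - σ * s x ^ (m + 2) * y₂ (c x)) * hsq

end

/-- The function `h` solves the radial spheroidal equation of order `m` and separation constant `N`
on `S ⊆ (0, ∞)`, written as a first-order system for `h` and its flux `F = sinh · h'`. -/
structure IsRadialMode (m : ℕ) (N : ℝ) (S : Set ℝ) (h F : ℝ → ℝ) : Prop where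
  hasDerivAt : ∀ η ∈ S, HasDerivAt h (F η / sinh η) η
  hasDerivAt_flux : ∀ η ∈ S, HasDerivAt F ((m ^ 2 + N * sinh η ^ 2) * h η / sinh η) η

lemma IsRadialMode.mono {m : ℕ} {N : ℝ} {S T : Set ℝ} {h F : ℝ → ℝ} (hh : IsRadialMode m N T h F)
    (hST : S ⊆ T) : IsRadialMode m N S h F :=
  ⟨fun η hη => hh.hasDerivAt η (hST hη), fun η hη => hh.hasDerivAt_flux η (hST hη)⟩

lemma isRadialMode_const (S : Set ℝ) : IsRadialMode 0 0 S (fun _ => 1) (fun _ => 0) where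
  hasDerivAt η _ := by simpa using hasDerivAt_const η (1 : ℝ)
  hasDerivAt_flux η _ := by simpa using hasDerivAt_const η (0 : ℝ)

lemma IsRadialMode.exists_wronskian_eq {m : ℕ} {N : ℝ} {S : Set ℝ} {h F g G : ℝ → ℝ}
    (hh : IsRadialMode m N S h F) (hg : IsRadialMode m N S g G) (hS : IsOpen S)
    (hS' : IsPreconnected S) : ∃ W, ∀ η ∈ S, F η * g η - h η * G η = W := by
  have hderiv : ∀ η ∈ S, HasDerivAt (fun η => F η * g η - h η * G η) 0 η := fun η hη =>
    (((hh.hasDerivAt_flux η hη).fun_mul (hg.hasDerivAt η hη)).fun_sub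
      ((hh.hasDerivAt η hη).fun_mul (hg.hasDerivAt_flux η hη))).congr_deriv (by ring)
  exact hS.exists_is_const_of_deriv_eq_zero hS'
    (fun η hη => (hderiv η hη).differentiableAt.differentiableWithinAt)
    fun η hη => (hderiv η hη).deriv

/-- The radial factor `(u² - 1)^(m/2) y⁽ᵐ⁾(u)` at `u = cosh η`. -/
def radialMode (m : ℕ) (y : ℝ → ℝ) (η : ℝ) : ℝ :=
  sinh η ^ m * iteratedDeriv m y (cosh η)

/-- The flux `sinh · h'` of `h = radialMode m y`. -/
def radialFlux (m : ℕ) (y : ℝ → ℝ) (η : ℝ) : ℝ :=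
  m * cosh η * radialMode m y η + sinh η ^ (m + 2) * iteratedDeriv (m + 1) y (cosh η)

lemma isRadialMode_of_ode {y : ℝ → ℝ} {m : ℕ} {N : ℝ}
    (hy : ∀ j, ∀ x > 1, HasDerivAt (iteratedDeriv j y) (iteratedDeriv (j + 1) y x) x)
    (hode : ∀ x > 1, (x ^ 2 - 1) * iteratedDeriv (m + 2) y x
      + 2 * (m + 1) * x * iteratedDeriv (m + 1) y x
      - (N - m * (m + 1)) * iteratedDeriv m y x = 0) :
    IsRadialMode m N (Set.Ioi 0) (radialMode m y) (radialFlux m y) where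
  hasDerivAt η hη := by
    obtain ⟨d, hd, h⟩ := exists_hasDerivAt_pow_mul_comp (σ := 1) (hasDerivAt_sinh η)
      (by simpa using hasDerivAt_cosh η) (hy m _ (one_lt_cosh.2 (ne_of_gt hη))) m
    refine hd.congr_deriv ?_
    rw [eq_div_iff (sinh_pos_iff.2 hη).ne', mul_comm, h, radialFlux, radialMode]
    ring
  hasDerivAt_flux η hη := by
    have hx := one_lt_cosh.2 (ne_of_gt hη)
    obtain ⟨d, hd, h⟩ := exists_hasDerivAt_flux (σ := 1) (hasDerivAt_sinh η)
      (by simpa using hasDerivAt_cosh η) (hy m _ hx) (hy (m + 1) _ hx) m N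
      (by rw [cosh_sq]; ring) (hode _ hx)
    simp only [one_mul] at hd h
    exact hd.congr_deriv (by rw [eq_div_iff (sinh_pos_iff.2 hη).ne', mul_comm, h, radialMode])

lemma isRadialMode_legendreP (n m : ℕ) : IsRadialMode m (n * (n + 1)) (Set.Ioi 0)
    (radialMode m (legendreP n)) (radialFlux m (legendreP n)) :=
  isRadialMode_of_ode (fun j x _ => hasDerivAt_iteratedDeriv_legendreP n j x)
    fun x _ => iteratedDeriv_legendreP_ode n m x

lemma isRadialMode_legendreQ (n m : ℕ) : IsRadialMode m (n * (n + 1)) (Set.Ioi 0)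
    (radialMode m (legendreQ n)) (radialFlux m (legendreQ n)) :=
  isRadialMode_of_ode (fun j _ hx => hasDerivAt_iteratedDeriv_legendreQ n j hx)
    fun _ hx => iteratedDeriv_legendreQ_ode n m hx

lemma radial_wronskian_eq_legendreWronskian (n m : ℕ) (η : ℝ) :
    radialMode m (legendreP n) η * radialFlux m (legendreQ n) η
      - radialMode m (legendreQ n) η * radialFlux m (legendreP n) η
      = legendreWronskian n m (cosh η) := by
  rw [legendreWronskian, ← sinh_sq, radialFlux, radialFlux, radialMode, radialMode]
  ring

/-- The function `f` solves the angular spheroidal equation of order `m` and separation constant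
`N`, in the form `sin · (sin · f')' = (m² - N sin²) f`. -/
structure IsAngularMode (m : ℕ) (N : ℝ) (f : ℝ → ℝ) : Prop where
  contDiff : ContDiff ℝ 2 f
  ode : ∀ θ, sin θ * (cos θ * deriv f θ + sin θ * deriv (deriv f) θ)
    = (m ^ 2 - N * sin θ ^ 2) * f θ

namespace IsAngularMode

variable {m : ℕ} {N : ℝ} {f : ℝ → ℝ}

lemma contDiff_deriv (hf : IsAngularMode m N f) : ContDiff ℝ 1 (deriv f) :=
  (contDiff_succ_iff_deriv (n := 1).1 hf.contDiff).2.2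

lemma hasDerivAt (hf : IsAngularMode m N f) (θ : ℝ) : HasDerivAt f (deriv f θ) θ :=
  (hf.contDiff.differentiable two_ne_zero θ).hasDerivAt

lemma hasDerivAt_deriv (hf : IsAngularMode m N f) (θ : ℝ) :
    HasDerivAt (deriv f) (deriv (deriv f) θ) θ :=
  (hf.contDiff_deriv.differentiable one_ne_zero θ).hasDerivAt

lemma continuous_deriv_deriv (hf : IsAngularMode m N f) : Continuous (deriv (deriv f)) :=
  hf.contDiff_deriv.continuous_deriv le_rfl

end IsAngularMode

lemma isAngularMode_const : IsAngularMode 0 0 (fun _ => 1) where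
  contDiff := contDiff_const
  ode θ := by simp

/-- The angular factor `(1 - v²)^(m/2) P_n⁽ᵐ⁾(v)` at `v = cos θ`. -/
def angularMode (n m : ℕ) (θ : ℝ) : ℝ :=
  sin θ ^ m * iteratedDeriv m (legendreP n) (cos θ)

lemma isAngularMode_angularMode (n m : ℕ) :
    IsAngularMode m (n * (n + 1)) (angularMode n m) := by
  have hcont : ContDiff ℝ 2 (angularMode n m) :=
    (contDiff_sin.pow m).mul ((contDiff_iteratedDeriv_legendreP n m).comp contDiff_cos)
  refine ⟨hcont, fun θ => ?_⟩
  have hcos (θ : ℝ) : HasDerivAt cos (-1 * sin θ) θ := by simpa using hasDerivAt_cos θ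
  have hP := hasDerivAt_iteratedDeriv_legendreP n m
  have hflux (θ : ℝ) : m * cos θ * (sin θ ^ m * iteratedDeriv m (legendreP n) (cos θ))
      + -1 * (sin θ ^ (m + 2) * iteratedDeriv (m + 1) (legendreP n) (cos θ))
      = sin θ * deriv (angularMode n m) θ := by
    obtain ⟨d, hd, h⟩ := exists_hasDerivAt_pow_mul_comp (hasDerivAt_sin θ) (hcos θ) (hP _) m
    rw [show deriv (angularMode n m) θ = d from hd.deriv, h]
    ring
  obtain ⟨d, hd, h⟩ := exists_hasDerivAt_flux (hasDerivAt_sin θ) (hcos θ) (hP _)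
    (hasDerivAt_iteratedDeriv_legendreP n (m + 1) _) m (n * (n + 1))
    (by rw [cos_sq']; ring) (iteratedDeriv_legendreP_ode n m _)
  simp only [hflux] at hd
  have hcont' : ContDiff ℝ 1 (deriv (angularMode n m)) :=
    (contDiff_succ_iff_deriv (n := 1).1 hcont).2.2
  have hderiv := (hasDerivAt_sin θ).fun_mul
    (hcont'.differentiable one_ne_zero θ).hasDerivAt
  rw [hderiv.unique hd, h, angularMode]
  ring

end SpheroidalModes

section InvSqrt

/-- The derivative `-r'/(2 r^(3/2))` of `r^(-1/2)`, as a function of `r` and `r'`. -/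
def invSqrtD (r r' : ℝ) : ℝ := -r' / (2 * √r ^ 3)

/-- The second derivative of `r^(-1/2)`, as a function of `r`, `r'` and `r''`. -/
def invSqrtDD (r r' r'' : ℝ) : ℝ := -r'' / (2 * √r ^ 3) + 3 * r' ^ 2 / (4 * √r ^ 5)

lemma hasDerivAt_invSqrt {r : ℝ → ℝ} {r' x : ℝ} (hr : HasDerivAt r r' x) (hpos : 0 < r x) :
    HasDerivAt (fun y => (√(r y))⁻¹) (invSqrtD (r x) r') x := by
  have hsqrt : 0 < √(r x) := Real.sqrt_pos.2 hpos
  refine ((hr.sqrt hpos.ne').fun_inv hsqrt.ne').congr_deriv ?_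
  rw [invSqrtD]
  field_simp

lemma hasDerivAt_invSqrtD {r r' : ℝ → ℝ} {r'' x : ℝ} (hr : HasDerivAt r (r' x) x)
    (hr' : HasDerivAt r' r'' x) (hpos : 0 < r x) :
    HasDerivAt (fun y => invSqrtD (r y) (r' y)) (invSqrtDD (r x) (r' x) r'') x := by
  have : 0 < √(r x) := Real.sqrt_pos.2 hpos
  refine (hr'.fun_neg.fun_div (((hr.sqrt hpos.ne').fun_pow 3).const_mul 2)
    (by positivity)).congr_deriv ?_
  rw [invSqrtDD]
  field_simp
  norm_num
  ring

variable {X : Type*} [TopologicalSpace X] {r r' r'' : X → ℝ} {s : Set X}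

lemma continuousOn_invSqrt (hr : Continuous r) (hpos : ∀ x ∈ s, 0 < r x) :
    ContinuousOn (fun x => (√(r x))⁻¹) s :=
  ContinuousOn.inv₀ (by fun_prop) fun x hx => (Real.sqrt_pos.2 (hpos x hx)).ne'

lemma continuousOn_invSqrtD (hr : Continuous r) (hr' : Continuous r') (hpos : ∀ x ∈ s, 0 < r x) :
    ContinuousOn (fun x => invSqrtD (r x) (r' x)) s :=
  ContinuousOn.div (by fun_prop) (by fun_prop) fun x hx =>
    mul_ne_zero two_ne_zero (pow_ne_zero _ (Real.sqrt_pos.2 (hpos x hx)).ne')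

lemma continuousOn_invSqrtDD (hr : Continuous r) (hr' : Continuous r') (hr'' : Continuous r'')
    (hpos : ∀ x ∈ s, 0 < r x) : ContinuousOn (fun x => invSqrtDD (r x) (r' x) (r'' x)) s :=
  (continuousOn_invSqrtD hr hr'' hpos).add <| ContinuousOn.div (by fun_prop) (by fun_prop)
    fun x hx => mul_ne_zero four_ne_zero (pow_ne_zero _ (Real.sqrt_pos.2 (hpos x hx)).ne')

end InvSqrt

section SpheroidalKernel

/-- The squared distance, in units of `a`, between the point with prolate coordinates
`u = cosh η`, `v = cos θ` and the point at height `A` and distance `β` from the axis, where `τ` is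
the difference of the azimuths. -/
def distSq (A β η θ τ : ℝ) : ℝ :=
  cosh η ^ 2 - sin θ ^ 2 - 2 * A * (cosh η * cos θ) - 2 * β * (sinh η * sin θ * cos τ)
    + A ^ 2 + β ^ 2

/-- The derivative of `distSq` in `η`. -/
def distSqη (A β η θ τ : ℝ) : ℝ :=
  2 * cosh η * sinh η - 2 * A * (sinh η * cos θ) - 2 * β * (cosh η * sin θ * cos τ)

/-- The second derivative of `distSq` in `η`. -/
def distSqηη (A β η θ τ : ℝ) : ℝ :=
  2 * (cosh η ^ 2 + sinh η ^ 2) - 2 * A * (cosh η * cos θ) - 2 * β * (sinh η * sin θ * cos τ)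

/-- The derivative of `distSq` in `θ`. -/
def distSqθ (A β η θ τ : ℝ) : ℝ :=
  -2 * sin θ * cos θ + 2 * A * (cosh η * sin θ) - 2 * β * (sinh η * cos θ * cos τ)

/-- The second derivative of `distSq` in `θ`. -/
def distSqθθ (A β η θ τ : ℝ) : ℝ :=
  -2 * (cos θ ^ 2 - sin θ ^ 2) + 2 * A * (cosh η * cos θ) + 2 * β * (sinh η * sin θ * cos τ)

variable (A β η θ τ : ℝ)

lemma hasDerivAt_distSq_eta :
    HasDerivAt (fun η => distSq A β η θ τ) (distSqη A β η θ τ) η := by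
  refine ((((((hasDerivAt_cosh η).fun_pow 2).sub_const (sin θ ^ 2)).fun_sub
    (((hasDerivAt_cosh η).mul_const (cos θ)).const_mul (2 * A))).fun_sub
    ((((hasDerivAt_sinh η).mul_const (sin θ)).mul_const (cos τ)).const_mul (2 * β))).add_const
    (A ^ 2)).add_const (β ^ 2) |>.congr_deriv ?_
  rw [distSqη]; norm_num

lemma hasDerivAt_distSqη :
    HasDerivAt (fun η => distSqη A β η θ τ) (distSqηη A β η θ τ) η := by
  refine ((((hasDerivAt_cosh η).const_mul 2).fun_mul (hasDerivAt_sinh η)).fun_sub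
    (((hasDerivAt_sinh η).mul_const (cos θ)).const_mul (2 * A))).fun_sub
    ((((hasDerivAt_cosh η).mul_const (sin θ)).mul_const (cos τ)).const_mul (2 * β))
    |>.congr_deriv ?_
  rw [distSqηη]; ring

lemma hasDerivAt_distSq_theta :
    HasDerivAt (fun θ => distSq A β η θ τ) (distSqθ A β η θ τ) θ := by
  refine ((((((hasDerivAt_sin θ).fun_pow 2).const_sub (cosh η ^ 2)).fun_sub
    (((hasDerivAt_cos θ).const_mul (cosh η)).const_mul (2 * A))).fun_sub
    ((((hasDerivAt_sin θ).const_mul (sinh η)).mul_const (cos τ)).const_mul (2 * β))).add_const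
    (A ^ 2)).add_const (β ^ 2) |>.congr_deriv ?_
  rw [distSqθ]; norm_num

lemma hasDerivAt_distSqθ :
    HasDerivAt (fun θ => distSqθ A β η θ τ) (distSqθθ A β η θ τ) θ := by
  refine ((((hasDerivAt_sin θ).const_mul (-2)).fun_mul (hasDerivAt_cos θ)).fun_add
    (((hasDerivAt_sin θ).const_mul (cosh η)).const_mul (2 * A))).fun_sub
    ((((hasDerivAt_cos θ).const_mul (sinh η)).mul_const (cos τ)).const_mul (2 * β))
    |>.congr_deriv ?_
  rw [distSqθθ]; ring

lemma hasDerivAt_distSq_tau :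
    HasDerivAt (fun τ => distSq A β η θ τ) (2 * β * (sinh η * sin θ * sin τ)) τ := by
  refine ((((hasDerivAt_cos τ).const_mul (sinh η * sin θ)).const_mul (2 * β)).const_sub
    (cosh η ^ 2 - sin θ ^ 2 - 2 * A * (cosh η * cos θ))).add_const (A ^ 2) |>.add_const (β ^ 2)
    |>.congr_deriv ?_
  ring

section Continuity

variable {X : Type*} [TopologicalSpace X] {η θ τ : X → ℝ}

@[fun_prop]
lemma continuous_distSq (hη : Continuous η) (hθ : Continuous θ) (hτ : Continuous τ) :
    Continuous fun x => distSq A β (η x) (θ x) (τ x) := by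
  unfold distSq; fun_prop

@[fun_prop]
lemma continuous_distSqη (hη : Continuous η) (hθ : Continuous θ) (hτ : Continuous τ) :
    Continuous fun x => distSqη A β (η x) (θ x) (τ x) := by
  unfold distSqη; fun_prop

@[fun_prop]
lemma continuous_distSqηη (hη : Continuous η) (hθ : Continuous θ) (hτ : Continuous τ) :
    Continuous fun x => distSqηη A β (η x) (θ x) (τ x) := by
  unfold distSqηη; fun_prop

@[fun_prop]
lemma continuous_distSqθ (hη : Continuous η) (hθ : Continuous θ) (hτ : Continuous τ) :
    Continuous fun x => distSqθ A β (η x) (θ x) (τ x) := by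
  unfold distSqθ; fun_prop

@[fun_prop]
lemma continuous_distSqθθ (hη : Continuous η) (hθ : Continuous θ) (hτ : Continuous τ) :
    Continuous fun x => distSqθθ A β (η x) (θ x) (τ x) := by
  unfold distSqθθ; fun_prop

end Continuity

/-- The kernel `1/|x - y|` in prolate coordinates, in units of `a`. -/
def newtonKernel (A β η θ τ : ℝ) : ℝ := (√(distSq A β η θ τ))⁻¹

/-- The derivative of `newtonKernel` in `η`. -/
def newtonKernelη (A β η θ τ : ℝ) : ℝ :=
  invSqrtD (distSq A β η θ τ) (distSqη A β η θ τ)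

/-- The second derivative of `newtonKernel` in `η`. -/
def newtonKernelηη (A β η θ τ : ℝ) : ℝ :=
  invSqrtDD (distSq A β η θ τ) (distSqη A β η θ τ) (distSqηη A β η θ τ)

/-- The derivative of `newtonKernel` in `θ`. -/
def newtonKernelθ (A β η θ τ : ℝ) : ℝ :=
  invSqrtD (distSq A β η θ τ) (distSqθ A β η θ τ)

/-- The second derivative of `newtonKernel` in `θ`. -/
def newtonKernelθθ (A β η θ τ : ℝ) : ℝ :=
  invSqrtDD (distSq A β η θ τ) (distSqθ A β η θ τ) (distSqθθ A β η θ τ)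

/-- The second derivative of `newtonKernel` in `τ`. -/
def newtonKernelττ (A β η θ τ : ℝ) : ℝ :=
  invSqrtDD (distSq A β η θ τ) (2 * β * (sinh η * sin θ * sin τ))
    (2 * β * (sinh η * sin θ * cos τ))

lemma gradient_sq_distSq : distSqη A β η θ τ ^ 2 + distSqθ A β η θ τ ^ 2
    + (sinh η ^ 2 + sin θ ^ 2) * (4 * β ^ 2 * sin τ ^ 2)
      = 4 * distSq A β η θ τ * (sinh η ^ 2 + sin θ ^ 2) := by
  unfold distSq distSqη distSqθ
  rw [sin_sq τ]
  have hcosh : cosh η ^ 2 = sinh η ^ 2 + 1 := cosh_sq η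
  have hcos : cos θ ^ 2 = 1 - sin θ ^ 2 := cos_sq' θ
  generalize cosh η = x at *
  generalize cos θ = c at *
  grind

lemma laplacian_distSq : sinh η * sin θ * (distSqηη A β η θ τ + distSqθθ A β η θ τ)
    + cosh η * sin θ * distSqη A β η θ τ + sinh η * cos θ * distSqθ A β η θ τ
    + (sinh η ^ 2 + sin θ ^ 2) * (2 * β * cos τ)
      = 6 * sinh η * sin θ * (sinh η ^ 2 + sin θ ^ 2) := by
  unfold distSqηη distSqθθ distSqη distSqθ
  have hcosh : cosh η ^ 2 = sinh η ^ 2 + 1 := cosh_sq η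
  have hcos : cos θ ^ 2 = 1 - sin θ ^ 2 := cos_sq' θ
  generalize cosh η = x at *
  generalize cos θ = c at *
  grind

variable {A β η θ τ}

lemma newtonKernel_harmonic (hpos : 0 < distSq A β η θ τ) (hθ : sin θ ≠ 0) (hη : sinh η ≠ 0) :
    sin θ * (sinh η * newtonKernelηη A β η θ τ + cosh η * newtonKernelη A β η θ τ)
      + sinh η * (sin θ * newtonKernelθθ A β η θ τ + cos θ * newtonKernelθ A β η θ τ)
      + (sinh η / sin θ + sin θ / sinh η) * newtonKernelττ A β η θ τ = 0 := by
  have : 0 < √(distSq A β η θ τ) := Real.sqrt_pos.2 hpos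
  have hsq : √(distSq A β η θ τ) ^ 2 = distSq A β η θ τ := Real.sq_sqrt hpos.le
  have hgrad := gradient_sq_distSq A β η θ τ
  rw [← hsq] at hgrad
  unfold newtonKernelη newtonKernelηη newtonKernelθ newtonKernelθθ newtonKernelττ invSqrtD invSqrtDD
  field_simp
  linear_combination (6 * sin θ * sinh η) * hgrad
    - 4 * √(distSq A β η θ τ) ^ 2 * laplacian_distSq A β η θ τ

end SpheroidalKernel

section ModeIntegral

lemma integral_Icc_eq_sub_of_hasDerivAt {a b : ℝ} (hab : a ≤ b) {F F' : ℝ → ℝ}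
    (hderiv : ∀ x ∈ Set.Icc a b, HasDerivAt F (F' x) x) (hcont : ContinuousOn F' (Set.Icc a b)) :
    ∫ x in Set.Icc a b, F' x = F b - F a := by
  rw [integral_Icc_eq_integral_Ioc, ← intervalIntegral.integral_of_le hab]
  rw [← Set.uIcc_of_le hab] at hderiv hcont
  exact intervalIntegral.integral_eq_sub_of_hasDerivAt hderiv hcont.intervalIntegrable

/-- The parameter rectangle `[0, π] × [-π, π]` of the angles `(θ, τ)`. -/
def angleRect : Set (ℝ × ℝ) := Set.Icc 0 π ×ˢ Set.Icc (-π) π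

lemma isCompact_angleRect : IsCompact angleRect := isCompact_Icc.prod isCompact_Icc

lemma integral_angleRect {F : ℝ × ℝ → ℝ} (hF : IntegrableOn F angleRect) :
    ∫ z in angleRect, F z = ∫ θ in Set.Icc 0 π, ∫ τ in Set.Icc (-π) π, F (θ, τ) :=
  setIntegral_prod F hF

lemma integral_angleRect_symm {F : ℝ × ℝ → ℝ} (hF : IntegrableOn F angleRect) :
    ∫ z in angleRect, F z = ∫ τ in Set.Icc (-π) π, ∫ θ in Set.Icc 0 π, F (θ, τ) := by
  rw [integral_angleRect hF, integral_integral_swap]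
  rw [Measure.prod_restrict]
  exact hF

lemma integral_sin_mul_wronskian_deriv {f f' f'' k k' k'' : ℝ → ℝ}
    (hf : ∀ θ ∈ Set.Icc 0 π, HasDerivAt f (f' θ) θ)
    (hf' : ∀ θ ∈ Set.Icc 0 π, HasDerivAt f' (f'' θ) θ) (hf'' : ContinuousOn f'' (Set.Icc 0 π))
    (hk : ∀ θ ∈ Set.Icc 0 π, HasDerivAt k (k' θ) θ)
    (hk' : ∀ θ ∈ Set.Icc 0 π, HasDerivAt k' (k'' θ) θ) (hk'' : ContinuousOn k'' (Set.Icc 0 π)) :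
    ∫ θ in Set.Icc 0 π, (cos θ * (f θ * k' θ - k θ * f' θ) + sin θ * (f θ * k'' θ - k θ * f'' θ))
      = 0 := by
  have hcont {g g' : ℝ → ℝ} (hg : ∀ θ ∈ Set.Icc 0 π, HasDerivAt g (g' θ) θ) :
      ContinuousOn g (Set.Icc 0 π) := HasDerivAt.continuousOn hg
  rw [integral_Icc_eq_sub_of_hasDerivAt (F := fun θ => sin θ * (f θ * k' θ - k θ * f' θ)) pi_pos.le]
  · simp
  · intro θ hθ
    refine ((hasDerivAt_sin θ).fun_mul (((hf θ hθ).fun_mul (hk' θ hθ)).fun_sub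
      ((hk θ hθ).fun_mul (hf' θ hθ)))).congr_deriv ?_
    ring
  · have := hcont hf
    have := hcont hf'
    have := hcont hk
    have := hcont hk'
    fun_prop

lemma integral_cos_mul_deriv_deriv_add {k k' k'' : ℝ → ℝ} (m : ℕ)
    (hk : ∀ τ ∈ Set.Icc (-π) π, HasDerivAt k (k' τ) τ)
    (hk' : ∀ τ ∈ Set.Icc (-π) π, HasDerivAt k' (k'' τ) τ) (hk'' : ContinuousOn k'' (Set.Icc (-π) π))
    (hper : k' π = k' (-π)) :
    ∫ τ in Set.Icc (-π) π, cos (m * τ) * (k'' τ + m ^ 2 * k τ) = 0 := by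
  rw [integral_Icc_eq_sub_of_hasDerivAt
    (F := fun τ => cos (m * τ) * k' τ + m * sin (m * τ) * k τ) (by linarith [pi_pos])]
  · simp [hper]
  · intro τ hτ
    have hlin : HasDerivAt (fun τ : ℝ => m * τ) m τ := by
      simpa using (hasDerivAt_id τ).const_mul (m : ℝ)
    refine ((hlin.cos.fun_mul (hk' τ hτ)).fun_add
      ((hlin.sin.const_mul (m : ℝ)).fun_mul (hk τ hτ))).congr_deriv ?_
    ring
  · have := HasDerivAt.continuousOn hk
    fun_prop

/-- The moment of `K` on the sphere against `f(θ) cos(mτ)`, for the area element `sin θ dθ dτ`. -/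
def modeIntegral (m : ℕ) (f : ℝ → ℝ) (K : ℝ → ℝ → ℝ) : ℝ :=
  ∫ z in angleRect, f z.1 * cos (m * z.2) * sin z.1 * K z.1 z.2

/-- The mode `(f, m)` of the single layer kernel, as a function of the spheroid `η`. -/
def modePotential (A β : ℝ) (m : ℕ) (f : ℝ → ℝ) (η : ℝ) : ℝ :=
  modeIntegral m f (newtonKernel A β η)

/-- The flux `sinh · g'` of `g = modePotential A β m f`. -/
def modeFlux (A β : ℝ) (m : ℕ) (f : ℝ → ℝ) (η : ℝ) : ℝ :=
  sinh η * modeIntegral m f (newtonKernelη A β η)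

variable {A β : ℝ} {m : ℕ} {f : ℝ → ℝ} {η : ℝ}

lemma hasDerivAt_modeIntegral (hf : Continuous f) {U : Set ℝ} (hU : IsOpen U)
    {K K' : ℝ → ℝ → ℝ → ℝ}
    (hK : ContinuousOn (fun w : ℝ × ℝ × ℝ => K w.1 w.2.1 w.2.2) (U ×ˢ angleRect))
    (hK' : ContinuousOn (fun w : ℝ × ℝ × ℝ => K' w.1 w.2.1 w.2.2) (U ×ˢ angleRect))
    (hderiv : ∀ η ∈ U, ∀ z ∈ angleRect, HasDerivAt (fun η => K η z.1 z.2) (K' η z.1 z.2) η)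
    (hη : η ∈ U) :
    HasDerivAt (fun η => modeIntegral m f (K η)) (modeIntegral m f (K' η)) η := by
  refine hasDerivAt_setIntegral_of_isCompact
    (F := fun η z => f z.1 * cos (m * z.2) * sin z.1 * K η z.1 z.2)
    (F' := fun η z => f z.1 * cos (m * z.2) * sin z.1 * K' η z.1 z.2)
    isCompact_angleRect hU (fun x hx => ?_) ?_
    (fun x hx z hz => (hderiv x hx z hz).const_mul _) hη
  · have hslice : ContinuousOn (fun z : ℝ × ℝ => K x z.1 z.2) angleRect :=
      hK.comp (f := fun z => (x, z)) (by fun_prop) fun z hz => ⟨hx, hz⟩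
    fun_prop
  · exact ContinuousOn.mul (by fun_prop) hK'

lemma hasDerivAt_modePotential (hf : Continuous f) {U : Set ℝ} (hU : IsOpen U)
    (hpos : ∀ η ∈ U, ∀ z ∈ angleRect, 0 < distSq A β η z.1 z.2) (hη : η ∈ U) :
    HasDerivAt (modePotential A β m f) (modeIntegral m f (newtonKernelη A β η)) η :=
  hasDerivAt_modeIntegral hf hU
    (continuousOn_invSqrt (by fun_prop) fun w hw => hpos w.1 hw.1 w.2 hw.2)
    (continuousOn_invSqrtD (by fun_prop) (by fun_prop) fun w hw => hpos w.1 hw.1 w.2 hw.2)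
    (fun η hη z hz => hasDerivAt_invSqrt (hasDerivAt_distSq_eta A β η z.1 z.2) (hpos η hη z hz)) hη

lemma hasDerivAt_modeIntegral_newtonKernelη (hf : Continuous f) {U : Set ℝ} (hU : IsOpen U)
    (hpos : ∀ η ∈ U, ∀ z ∈ angleRect, 0 < distSq A β η z.1 z.2) (hη : η ∈ U) :
    HasDerivAt (fun η => modeIntegral m f (newtonKernelη A β η))
      (modeIntegral m f (newtonKernelηη A β η)) η :=
  hasDerivAt_modeIntegral hf hU
    (continuousOn_invSqrtD (by fun_prop) (by fun_prop) fun w hw => hpos w.1 hw.1 w.2 hw.2)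
    (continuousOn_invSqrtDD (by fun_prop) (by fun_prop) (by fun_prop)
      fun w hw => hpos w.1 hw.1 w.2 hw.2)
    (fun η hη z hz => hasDerivAt_invSqrtD (r' := fun η => distSqη A β η z.1 z.2)
      (hasDerivAt_distSq_eta A β η z.1 z.2) (hasDerivAt_distSqη A β η z.1 z.2) (hpos η hη z hz)) hη

/-- The radial spheroidal operator of order `m` and separation constant `N`, applied to
`newtonKernel` in the variable `η`. -/
def radialOperatorKernel (A β : ℝ) (m : ℕ) (N η θ τ : ℝ) : ℝ :=
  sinh η * newtonKernelηη A β η θ τ + cosh η * newtonKernelη A β η θ τ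
    - (N * sinh η + m ^ 2 / sinh η) * newtonKernel A β η θ τ

/-- The `θ`-derivative of `sin θ` times the Wronskian in `θ` of `f` and `newtonKernel`. -/
def thetaWronskianDeriv (A β : ℝ) (f : ℝ → ℝ) (η θ τ : ℝ) : ℝ :=
  cos θ * (f θ * newtonKernelθ A β η θ τ - newtonKernel A β η θ τ * deriv f θ)
    + sin θ * (f θ * newtonKernelθθ A β η θ τ - newtonKernel A β η θ τ * deriv (deriv f) θ)

lemma mode_mul_radialOperatorKernel {N θ τ : ℝ} (hf : IsAngularMode m N f)
    (hpos : 0 < distSq A β η θ τ) (hθ : sin θ ≠ 0) (hη : sinh η ≠ 0) :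
    f θ * cos (m * τ) * sin θ * radialOperatorKernel A β m N η θ τ
      = -((sinh η / sin θ + sin θ / sinh η) * f θ) *
          (cos (m * τ) * (newtonKernelττ A β η θ τ + m ^ 2 * newtonKernel A β η θ τ))
        - sinh η * (cos (m * τ) * thetaWronskianDeriv A β f η θ τ) := by
  have hode : cos θ * deriv f θ + sin θ * deriv (deriv f) θ
      = m ^ 2 * f θ / sin θ - N * sin θ * f θ := by
    field_simp
    linear_combination hf.ode θ
  rw [radialOperatorKernel, thetaWronskianDeriv]
  linear_combination (f θ * cos (m * τ)) * newtonKernel_harmonic hpos hθ hη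
    - (sinh η * cos (m * τ) * newtonKernel A β η θ τ) * hode

lemma integral_thetaWronskianDeriv {N : ℝ} (hf : IsAngularMode m N f) {τ : ℝ}
    (hpos : ∀ θ ∈ Set.Icc 0 π, 0 < distSq A β η θ τ) :
    ∫ θ in Set.Icc 0 π, thetaWronskianDeriv A β f η θ τ = 0 :=
  integral_sin_mul_wronskian_deriv (fun θ _ => hf.hasDerivAt θ)
    (fun θ _ => hf.hasDerivAt_deriv θ) hf.continuous_deriv_deriv.continuousOn
    (fun θ hθ => hasDerivAt_invSqrt (hasDerivAt_distSq_theta A β η θ τ) (hpos θ hθ))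
    (fun θ hθ => hasDerivAt_invSqrtD (r' := fun θ => distSqθ A β η θ τ)
      (hasDerivAt_distSq_theta A β η θ τ) (hasDerivAt_distSqθ A β η θ τ) (hpos θ hθ))
    (continuousOn_invSqrtDD (by fun_prop) (by fun_prop) (by fun_prop) hpos)

lemma integral_cos_mul_newtonKernelττ_add (m : ℕ) {θ : ℝ}
    (hpos : ∀ τ ∈ Set.Icc (-π) π, 0 < distSq A β η θ τ) :
    ∫ τ in Set.Icc (-π) π,
      cos (m * τ) * (newtonKernelττ A β η θ τ + m ^ 2 * newtonKernel A β η θ τ) = 0 :=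
  integral_cos_mul_deriv_deriv_add m
    (fun τ hτ => hasDerivAt_invSqrt (hasDerivAt_distSq_tau A β η θ τ) (hpos τ hτ))
    (fun τ hτ => hasDerivAt_invSqrtD (r' := fun τ => 2 * β * (sinh η * sin θ * sin τ))
      (hasDerivAt_distSq_tau A β η θ τ)
      (((hasDerivAt_sin τ).const_mul (sinh η * sin θ)).const_mul (2 * β)) (hpos τ hτ))
    (continuousOn_invSqrtDD (by fun_prop) (by fun_prop) (by fun_prop) hpos)
    (by simp [invSqrtD])

lemma integrableOn_mode_mul (hf : Continuous f) (m : ℕ) {K : ℝ → ℝ → ℝ}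
    (hK : ContinuousOn (fun z : ℝ × ℝ => K z.1 z.2) angleRect) :
    IntegrableOn (fun z : ℝ × ℝ => f z.1 * cos (m * z.2) * sin z.1 * K z.1 z.2) angleRect :=
  ContinuousOn.integrableOn_compact isCompact_angleRect (ContinuousOn.mul (by fun_prop) hK)

lemma continuousOn_newtonKernel
    (hpos : ∀ z ∈ angleRect, 0 < distSq A β η z.1 z.2) :
    ContinuousOn (fun z : ℝ × ℝ => newtonKernel A β η z.1 z.2) angleRect :=
  continuousOn_invSqrt (by fun_prop) hpos

lemma continuousOn_newtonKernelη
    (hpos : ∀ z ∈ angleRect, 0 < distSq A β η z.1 z.2) :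
    ContinuousOn (fun z : ℝ × ℝ => newtonKernelη A β η z.1 z.2) angleRect :=
  continuousOn_invSqrtD (by fun_prop) (by fun_prop) hpos

lemma continuousOn_newtonKernelηη
    (hpos : ∀ z ∈ angleRect, 0 < distSq A β η z.1 z.2) :
    ContinuousOn (fun z : ℝ × ℝ => newtonKernelηη A β η z.1 z.2) angleRect :=
  continuousOn_invSqrtDD (by fun_prop) (by fun_prop) (by fun_prop) hpos

lemma continuousOn_radialOperatorKernel
    (hpos : ∀ z ∈ angleRect, 0 < distSq A β η z.1 z.2) (m : ℕ) (N : ℝ) :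
    ContinuousOn (fun z : ℝ × ℝ => radialOperatorKernel A β m N η z.1 z.2) angleRect :=
  ((continuousOn_const.mul (continuousOn_newtonKernelηη hpos)).add
    (continuousOn_const.mul (continuousOn_newtonKernelη hpos))).sub
    (continuousOn_const.mul (continuousOn_newtonKernel hpos))

lemma continuousOn_thetaWronskianDeriv
    (hpos : ∀ z ∈ angleRect, 0 < distSq A β η z.1 z.2) {N : ℝ} (hf : IsAngularMode m N f) :
    ContinuousOn (fun z : ℝ × ℝ => thetaWronskianDeriv A β f η z.1 z.2) angleRect := by
  have hf₀ := hf.contDiff.continuous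
  have hf₁ := hf.contDiff_deriv.continuous
  have hf₂ := hf.continuous_deriv_deriv
  have hk := continuousOn_newtonKernel hpos
  have hkθ : ContinuousOn (fun z : ℝ × ℝ => newtonKernelθ A β η z.1 z.2) angleRect :=
    continuousOn_invSqrtD (by fun_prop) (by fun_prop) hpos
  have hkθθ : ContinuousOn (fun z : ℝ × ℝ => newtonKernelθθ A β η z.1 z.2) angleRect :=
    continuousOn_invSqrtDD (by fun_prop) (by fun_prop) (by fun_prop) hpos
  unfold thetaWronskianDeriv
  fun_prop

lemma modeIntegral_radialOperatorKernel {N : ℝ} (hf : IsAngularMode m N f)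
    (hpos : ∀ z ∈ angleRect, 0 < distSq A β η z.1 z.2) (hη : 0 < sinh η) :
    modeIntegral m f (radialOperatorKernel A β m N η) = 0 := by
  set E : ℝ × ℝ → ℝ := fun z =>
    f z.1 * cos (m * z.2) * sin z.1 * radialOperatorKernel A β m N η z.1 z.2
  set T : ℝ × ℝ → ℝ := fun z => sinh η * (cos (m * z.2) * thetaWronskianDeriv A β f η z.1 z.2)
  have hE : IntegrableOn E angleRect := integrableOn_mode_mul hf.contDiff.continuous m
    (continuousOn_radialOperatorKernel hpos m N)
  have hT : IntegrableOn T angleRect := by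
    have := continuousOn_thetaWronskianDeriv hpos hf
    exact ContinuousOn.integrableOn_compact isCompact_angleRect (by fun_prop)
  have hT_zero : ∫ z in angleRect, T z = 0 := by
    rw [integral_angleRect_symm hT]
    refine setIntegral_eq_zero_of_forall_eq_zero fun τ hτ => ?_
    simp only [T]
    rw [integral_const_mul, integral_const_mul,
      integral_thetaWronskianDeriv hf fun θ hθ => hpos (θ, τ) ⟨hθ, hτ⟩, mul_zero, mul_zero]
  have hsum : ∫ z in angleRect, (E z + T z) = 0 := by
    rw [integral_angleRect (F := fun z => E z + T z) (hE.add hT), integral_Icc_eq_integral_Ioo]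
    refine setIntegral_eq_zero_of_forall_eq_zero fun θ hθ => ?_
    have hθ' : ∀ τ ∈ Set.Icc (-π) π, 0 < distSq A β η θ τ := fun τ hτ =>
      hpos (θ, τ) ⟨Set.Ioo_subset_Icc_self hθ, hτ⟩
    rw [setIntegral_congr_fun measurableSet_Icc fun τ hτ => by
        simp only [E, T]
        rw [mode_mul_radialOperatorKernel hf (hθ' τ hτ) (sin_pos_of_mem_Ioo hθ).ne' hη.ne',
          sub_add_cancel],
      integral_const_mul, integral_cos_mul_newtonKernelττ_add m hθ', mul_zero]
  rwa [integral_add hE hT, hT_zero, add_zero] at hsum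

lemma modeIntegral_newtonKernel_ode {N : ℝ} (hf : IsAngularMode m N f)
    (hpos : ∀ z ∈ angleRect, 0 < distSq A β η z.1 z.2) (hη : 0 < sinh η) :
    sinh η * modeIntegral m f (newtonKernelηη A β η)
      + cosh η * modeIntegral m f (newtonKernelη A β η)
      = (N * sinh η + m ^ 2 / sinh η) * modePotential A β m f η := by
  have hf₀ := hf.contDiff.continuous
  have h₀ := integrableOn_mode_mul hf₀ m (continuousOn_newtonKernel hpos)
  have h₁ := integrableOn_mode_mul hf₀ m (continuousOn_newtonKernelη hpos)
  have h₂ := integrableOn_mode_mul hf₀ m (continuousOn_newtonKernelηη hpos)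
  rw [← sub_eq_zero, ← modeIntegral_radialOperatorKernel hf hpos hη]
  simp only [modePotential, modeIntegral, ← integral_const_mul]
  rw [← integral_add (h₂.const_mul _) (h₁.const_mul _),
    ← integral_sub (by exact (h₂.const_mul _).add (h₁.const_mul _)) (h₀.const_mul _)]
  refine integral_congr_ae (.of_forall fun z => ?_)
  simp only [radialOperatorKernel]
  ring

lemma isRadialMode_modePotential {N : ℝ} (hf : IsAngularMode m N f) {S : Set ℝ} (hS : IsOpen S)
    (hS_pos : S ⊆ Set.Ioi 0) (hpos : ∀ η ∈ S, ∀ z ∈ angleRect, 0 < distSq A β η z.1 z.2) :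
    IsRadialMode m N S (modePotential A β m f) (modeFlux A β m f) where
  hasDerivAt η hη := by
    rw [modeFlux, mul_div_cancel_left₀ _ (sinh_pos_iff.2 (hS_pos hη)).ne']
    exact hasDerivAt_modePotential hf.contDiff.continuous hS hpos hη
  hasDerivAt_flux η hη := by
    have hsinh := sinh_pos_iff.2 (hS_pos hη)
    refine ((hasDerivAt_sinh η).fun_mul (hasDerivAt_modeIntegral_newtonKernelη
      hf.contDiff.continuous hS hpos hη)).congr_deriv ?_
    rw [add_comm, modeIntegral_newtonKernel_ode hf (hpos η hη) hsinh]
    field_simp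
    ring

end ModeIntegral

section InnerRegion

open Filter Topology

lemma distSq_eq_mul_add (e b η θ τ : ℝ) :
    distSq (cosh e * cos b) (sinh e * sin b) η θ τ
      = (cosh (η + e) - cos (θ + b)) * (cosh (η - e) - cos (θ - b))
        + 2 * (sinh η * sinh e * (sin θ * sin b)) * (1 - cos τ) := by
  rw [distSq, cosh_add, cosh_sub, cos_add, cos_sub]
  linear_combination (cos b ^ 2 - cosh η ^ 2) * cosh_sq e - sinh e ^ 2 * cosh_sq η
    + (sinh e ^ 2 + 1 - cos θ ^ 2) * sin_sq_add_cos_sq b + (sin b ^ 2 - 1) * sin_sq_add_cos_sq θ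

variable {e b : ℝ}

lemma distSq_pos_of_nonneg (he : 0 < e) (hb : b ∈ Set.Ioo 0 π) {η θ : ℝ} (hη : 0 ≤ η)
    (hne : η ≠ e) (hθ : θ ∈ Set.Icc 0 π) (τ : ℝ) :
    0 < distSq (cosh e * cos b) (sinh e * sin b) η θ τ := by
  have h₁ : 1 < cosh (η + e) := one_lt_cosh.2 (by positivity)
  have h₂ : 1 < cosh (η - e) := one_lt_cosh.2 (sub_ne_zero.2 hne)
  have : 0 ≤ sinh η := sinh_nonneg_iff.2 hη
  have : 0 < sinh e := sinh_pos_iff.2 he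
  have hsin_θ := sin_nonneg_of_mem_Icc hθ
  have hsin_b := sin_pos_of_mem_Ioo hb
  rw [distSq_eq_mul_add]
  exact add_pos_of_pos_of_nonneg
    (mul_pos (by linarith [cos_le_one (θ + b)]) (by linarith [cos_le_one (θ - b)]))
    (mul_nonneg (by positivity) (by linarith [cos_le_one τ]))

lemma distSq_pos (he : 0 < e) (hb : b ∈ Set.Ioo 0 π) {η : ℝ} (hne : |η| ≠ e) {z : ℝ × ℝ}
    (hz : z ∈ angleRect) : 0 < distSq (cosh e * cos b) (sinh e * sin b) η z.1 z.2 := by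
  rcases abs_cases η with ⟨h, hη⟩ | ⟨h, hη⟩
  · exact distSq_pos_of_nonneg he hb hη (h ▸ hne) hz.1 z.2
  · have hreflect : distSq (cosh e * cos b) (sinh e * sin b) η z.1 z.2
        = distSq (cosh e * cos b) (sinh e * sin b) (-η) z.1 (z.2 + π) := by
      simp only [distSq, cosh_neg, sinh_neg, cos_add_pi]
      ring
    rw [hreflect]
    exact distSq_pos_of_nonneg he hb (by linarith) (h ▸ hne) hz.1 _

variable {m : ℕ} {N : ℝ} {f h F : ℝ → ℝ}

lemma isRadialMode_modePotential_off (he : 0 < e) (hb : b ∈ Set.Ioo 0 π)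
    (hf : IsAngularMode m N f) {S : Set ℝ} (hS : IsOpen S) (hS_pos : S ⊆ Set.Ioi 0) (hSe : e ∉ S) :
    IsRadialMode m N S (modePotential (cosh e * cos b) (sinh e * sin b) m f)
      (modeFlux (cosh e * cos b) (sinh e * sin b) m f) := by
  refine isRadialMode_modePotential hf hS hS_pos fun η hη z hz => distSq_pos he hb ?_ hz
  rw [abs_of_pos (hS_pos hη)]
  exact ne_of_mem_of_not_mem hη hSe

lemma wronskian_modePotential_eq_zero_of_lt (he : 0 < e) (hb : b ∈ Set.Ioo 0 π)
    (hf : IsAngularMode m N f) (hh : IsRadialMode m N (Set.Ioi 0) h F)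
    (hh₀ : ContinuousAt h 0) (hF₀ : ContinuousAt F 0) (hF : F 0 = 0) {η : ℝ}
    (hη : η ∈ Set.Ioo 0 e) :
    F η * modePotential (cosh e * cos b) (sinh e * sin b) m f η
      - h η * modeFlux (cosh e * cos b) (sinh e * sin b) m f η = 0 := by
  set g := modePotential (cosh e * cos b) (sinh e * sin b) m f
  set G := modeFlux (cosh e * cos b) (sinh e * sin b) m f with hG_def
  have hU : IsOpen {η : ℝ | |η| ≠ e} := isOpen_ne_fun continuous_abs continuous_const
  have hpos : ∀ η ∈ {η : ℝ | |η| ≠ e}, ∀ z ∈ angleRect,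
      0 < distSq (cosh e * cos b) (sinh e * sin b) η z.1 z.2 :=
    fun η hη z hz => distSq_pos he hb hη hz
  have h0U : (0 : ℝ) ∈ {η : ℝ | |η| ≠ e} := by simpa using he.ne
  have hg₀ : ContinuousAt g 0 :=
    (hasDerivAt_modePotential hf.contDiff.continuous hU hpos h0U).continuousAt
  have hG₀ : ContinuousAt G 0 := continuous_sinh.continuousAt.mul
    (hasDerivAt_modeIntegral_newtonKernelη hf.contDiff.continuous hU hpos h0U).continuousAt
  obtain ⟨W, hW⟩ := (hh.mono fun η hη => hη.1).exists_wronskian_eq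
    (isRadialMode_modePotential_off he hb hf isOpen_Ioo (fun η hη => hη.1) fun h => h.2.false)
    isOpen_Ioo isPreconnected_Ioo
  have hlim : Tendsto (fun η => F η * g η - h η * G η) (𝓝[>] 0) (𝓝 (F 0 * g 0 - h 0 * G 0)) :=
    ((hF₀.mul hg₀).sub (hh₀.mul hG₀)).tendsto.mono_left nhdsWithin_le_nhds
  have hlim' : Tendsto (fun η => F η * g η - h η * G η) (𝓝[>] 0) (𝓝 W) :=
    tendsto_const_nhds.congr' (by
      filter_upwards [Ioo_mem_nhdsGT he] with η hη using (hW η hη).symm)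
  rw [hW η hη, tendsto_nhds_unique hlim' hlim, hF, hG_def, modeFlux, sinh_zero]
  ring

lemma continuous_radialMode_legendreP (n m : ℕ) : Continuous (radialMode m (legendreP n)) := by
  have := continuous_iteratedDeriv_legendreP n m
  unfold radialMode
  fun_prop

lemma continuous_radialFlux_legendreP (n m : ℕ) : Continuous (radialFlux m (legendreP n)) := by
  have := continuous_radialMode_legendreP n m
  have := continuous_iteratedDeriv_legendreP n (m + 1)
  unfold radialFlux
  fun_prop

lemma radialFlux_zero (m : ℕ) (y : ℝ → ℝ) : radialFlux m y 0 = 0 := by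
  cases m <;> simp [radialFlux, radialMode]

end InnerRegion

section FarField

open Filter Topology Asymptotics

lemma tendsto_cosh_atTop : Tendsto cosh atTop atTop := by
  refine tendsto_atTop_mono' _ ?_ tendsto_id
  filter_upwards [eventually_ge_atTop 0] with x hx
  exact (self_le_sinh_iff.2 hx).trans (sinh_lt_cosh x).le

lemma tendsto_inv_cosh_atTop : Tendsto (fun x => (cosh x)⁻¹) atTop (𝓝 0) :=
  tendsto_inv_atTop_zero.comp tendsto_cosh_atTop

lemma tendsto_tanh_atTop : Tendsto tanh atTop (𝓝 1) := by
  have hlim : Tendsto (fun x => √(1 - (cosh x)⁻¹ ^ 2)) atTop (𝓝 1) := by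
    simpa using ((tendsto_inv_cosh_atTop.pow 2).const_sub 1).sqrt
  refine hlim.congr' ?_
  filter_upwards [eventually_ge_atTop 0] with x hx
  have hcosh := cosh_pos x
  have hsq : 1 - (cosh x)⁻¹ ^ 2 = (sinh x / cosh x) ^ 2 := by
    field_simp
    linarith [cosh_sq x]
  rw [hsq, sqrt_sq (div_nonneg (sinh_nonneg_iff.2 hx) hcosh.le), tanh_eq_sinh_div_cosh]

lemma abs_sinh_le_cosh (x : ℝ) : |sinh x| ≤ cosh x :=
  abs_le_of_sq_le_sq (by linarith [cosh_sq x]) (cosh_pos x).le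

lemma cosh_sq_div_four_le_distSq {A β η : ℝ} (hη : 4 * (A ^ 2 + β ^ 2) + 2 ≤ cosh η ^ 2) (θ τ : ℝ) :
    cosh η ^ 2 / 4 ≤ distSq A β η θ τ := by
  have hz : (cosh η * cos θ - A) ^ 2 ≥ (cosh η * cos θ) ^ 2 / 2 - A ^ 2 := by
    linarith [sq_nonneg (cosh η * cos θ - 2 * A)]
  have hr : (sinh η * sin θ) ^ 2 - 2 * β * (sinh η * sin θ * cos τ) + β ^ 2
      ≥ (sinh η * sin θ) ^ 2 / 2 - β ^ 2 := by
    linarith [sq_nonneg (sinh η * sin θ - 2 * β * cos τ),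
      mul_le_of_le_one_right (sq_nonneg β) (cos_sq_le_one τ)]
  have hsum : (cosh η * cos θ) ^ 2 + (sinh η * sin θ) ^ 2 = sinh η ^ 2 + cos θ ^ 2 := by
    rw [mul_pow, mul_pow, cosh_sq, sin_sq]
    ring
  have hdist : distSq A β η θ τ = (cosh η * cos θ - A) ^ 2
      + ((sinh η * sin θ) ^ 2 - 2 * β * (sinh η * sin θ * cos τ) + β ^ 2) := by
    rw [distSq]
    linear_combination cosh_sq η - sin_sq_add_cos_sq θ - hsum
  linarith [cosh_sq η, sq_nonneg (cos θ)]

lemma abs_distSqη_le {A β η θ τ : ℝ} (hpos : 0 ≤ distSq A β η θ τ) :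
    |distSqη A β η θ τ| ≤ 2 * √(distSq A β η θ τ) * cosh η := by
  have := cosh_pos η
  refine abs_le_of_sq_le_sq ?_ (by positivity)
  rw [mul_pow, mul_pow, sq_sqrt hpos]
  have hle : sinh η ^ 2 + sin θ ^ 2 ≤ cosh η ^ 2 := by linarith [cosh_sq η, sin_sq_le_one θ]
  have hτ : 0 ≤ (sinh η ^ 2 + sin θ ^ 2) * (4 * β ^ 2 * sin τ ^ 2) := by positivity
  linarith [gradient_sq_distSq A β η θ τ, sq_nonneg (distSqθ A β η θ τ),
    mul_le_mul_of_nonneg_left hle hpos]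

lemma abs_newtonKernelη_le {A β η θ τ : ℝ} (hpos : 0 < distSq A β η θ τ) :
    |newtonKernelη A β η θ τ| ≤ cosh η / distSq A β η θ τ := by
  have : 0 < √(distSq A β η θ τ) := sqrt_pos.2 hpos
  rw [newtonKernelη, invSqrtD, abs_div, abs_neg, abs_of_pos (a := 2 * _) (by positivity)]
  calc _ ≤ 2 * √(distSq A β η θ τ) * cosh η / (2 * √(distSq A β η θ τ) ^ 3) := by
        gcongr
        exact abs_distSqη_le hpos.le
    _ = cosh η / √(distSq A β η θ τ) ^ 2 := by field_simp
    _ = _ := by rw [sq_sqrt hpos.le]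

lemma eventually_le_cosh_sq (A β : ℝ) : ∀ᶠ η in atTop, 4 * (A ^ 2 + β ^ 2) + 2 ≤ cosh η ^ 2 :=
  ((tendsto_pow_atTop two_ne_zero).comp tendsto_cosh_atTop).eventually_ge_atTop _

section Decay

variable {A β η : ℝ}

lemma distSq_pos_of_large (hη : 4 * (A ^ 2 + β ^ 2) + 2 ≤ cosh η ^ 2) (θ τ : ℝ) :
    0 < distSq A β η θ τ := by
  have := cosh_pos η
  exact lt_of_lt_of_le (by positivity) (cosh_sq_div_four_le_distSq hη θ τ)

lemma abs_newtonKernel_le_of_large (hη : 4 * (A ^ 2 + β ^ 2) + 2 ≤ cosh η ^ 2) (θ τ : ℝ) :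
    |newtonKernel A β η θ τ| ≤ 2 / cosh η := by
  have := cosh_pos η
  have hsqrt : cosh η / 2 ≤ √(distSq A β η θ τ) :=
    le_sqrt_of_sq_le (by linarith [cosh_sq_div_four_le_distSq hη θ τ])
  rw [newtonKernel, abs_of_nonneg (by positivity), ← inv_div]
  gcongr

lemma abs_sinh_mul_newtonKernelη_le_of_large (hη : 4 * (A ^ 2 + β ^ 2) + 2 ≤ cosh η ^ 2) (θ τ : ℝ) :
    |sinh η * newtonKernelη A β η θ τ| ≤ 4 := by
  have := cosh_pos η
  calc |sinh η * newtonKernelη A β η θ τ| ≤ cosh η * (cosh η / (cosh η ^ 2 / 4)) := by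
        rw [abs_mul]
        gcongr
        · exact abs_sinh_le_cosh η
        refine (abs_newtonKernelη_le (distSq_pos_of_large hη θ τ)).trans ?_
        gcongr
        exact cosh_sq_div_four_le_distSq hη θ τ
    _ = 4 := by field_simp

end Decay

section Limits

variable (A β θ τ : ℝ)

lemma tendsto_distSq_div_cosh_sq :
    Tendsto (fun η => distSq A β η θ τ / cosh η ^ 2) atTop (𝓝 1) := by
  have hinv := tendsto_inv_cosh_atTop
  have hlim : Tendsto (fun η => 1 - sin θ ^ 2 * (cosh η)⁻¹ ^ 2 - 2 * A * cos θ * (cosh η)⁻¹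
      - 2 * β * (sin θ * cos τ) * (tanh η * (cosh η)⁻¹) + (A ^ 2 + β ^ 2) * (cosh η)⁻¹ ^ 2)
      atTop (𝓝 1) := by
    simpa using (((((hinv.pow 2).const_mul (sin θ ^ 2)).const_sub 1).sub
      (hinv.const_mul (2 * A * cos θ))).sub
      ((tendsto_tanh_atTop.mul hinv).const_mul (2 * β * (sin θ * cos τ)))).add
      ((hinv.pow 2).const_mul (A ^ 2 + β ^ 2))
  refine hlim.congr fun η => ?_
  have := cosh_pos η
  rw [distSq, tanh_eq_sinh_div_cosh]
  field_simp
  ring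

lemma tendsto_distSqη_div_cosh_sq :
    Tendsto (fun η => distSqη A β η θ τ / cosh η ^ 2) atTop (𝓝 2) := by
  have hinv := tendsto_inv_cosh_atTop
  have hlim : Tendsto (fun η => 2 * tanh η - 2 * A * cos θ * (tanh η * (cosh η)⁻¹)
      - 2 * β * (sin θ * cos τ) * (cosh η)⁻¹) atTop (𝓝 2) := by
    simpa using ((tendsto_tanh_atTop.const_mul 2).sub
      ((tendsto_tanh_atTop.mul hinv).const_mul (2 * A * cos θ))).sub
      (hinv.const_mul (2 * β * (sin θ * cos τ)))
  refine hlim.congr fun η => ?_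
  have := cosh_pos η
  rw [distSqη, tanh_eq_sinh_div_cosh]
  field_simp

lemma tendsto_newtonKernel_atTop : Tendsto (fun η => newtonKernel A β η θ τ) atTop (𝓝 0) := by
  refine squeeze_zero_norm' (a := fun η => 2 / cosh η) ?_ (tendsto_cosh_atTop.const_div_atTop 2)
  filter_upwards [eventually_le_cosh_sq A β] with η hη
  exact abs_newtonKernel_le_of_large hη θ τ

lemma tendsto_sinh_mul_newtonKernelη_atTop :
    Tendsto (fun η => sinh η * newtonKernelη A β η θ τ) atTop (𝓝 (-1)) := by
  have hlim : Tendsto (fun η => tanh η * invSqrtD (distSq A β η θ τ / cosh η ^ 2)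
      (distSqη A β η θ τ / cosh η ^ 2)) atTop (𝓝 (-1)) := by
    have := tendsto_tanh_atTop.mul (((tendsto_distSqη_div_cosh_sq A β θ τ).neg).div
      (((tendsto_distSq_div_cosh_sq A β θ τ).sqrt.pow 3).const_mul 2) (by norm_num))
    norm_num at this
    exact this
  refine hlim.congr' ?_
  filter_upwards [eventually_le_cosh_sq A β] with η hη
  have hcosh := cosh_pos η
  have hsqrt : 0 < √(distSq A β η θ τ) := sqrt_pos.2 (distSq_pos_of_large hη θ τ)
  rw [newtonKernelη, invSqrtD, invSqrtD, sqrt_div' _ (by positivity), sqrt_sq hcosh.le,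
    tanh_eq_sinh_div_cosh]
  field_simp

end Limits

lemma tendsto_modeIntegral {f : ℝ → ℝ} (hf : Continuous f) (m : ℕ) {K : ℝ → ℝ → ℝ → ℝ}
    {l : Filter ℝ} [l.IsCountablyGenerated] {C κ : ℝ}
    (hcont : ∀ᶠ η in l, ContinuousOn (fun z : ℝ × ℝ => K η z.1 z.2) angleRect)
    (hbound : ∀ᶠ η in l, ∀ z ∈ angleRect, |K η z.1 z.2| ≤ C)
    (hlim : ∀ z ∈ angleRect, Tendsto (fun η => K η z.1 z.2) l (𝓝 κ)) :
    Tendsto (fun η => modeIntegral m f (K η)) l (𝓝 (modeIntegral m f fun _ _ => κ)) := by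
  refine tendsto_integral_filter_of_dominated_convergence
    (fun z => |f z.1 * cos (m * z.2) * sin z.1| * C) ?_ ?_ ?_ ?_
  · filter_upwards [hcont] with η hη
    exact (integrableOn_mode_mul hf m hη).aestronglyMeasurable
  · filter_upwards [hbound] with η hη
    filter_upwards [ae_restrict_mem isCompact_angleRect.measurableSet] with z hz
    rw [norm_mul, norm_eq_abs, norm_eq_abs]
    gcongr
    exact hη z hz
  · exact ContinuousOn.integrableOn_compact isCompact_angleRect (by fun_prop)
  · filter_upwards [ae_restrict_mem isCompact_angleRect.measurableSet] with z hz
    exact (hlim z hz).const_mul _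

lemma modeFlux_eq_modeIntegral (A β : ℝ) (m : ℕ) (f : ℝ → ℝ) (η : ℝ) :
    modeFlux A β m f η = modeIntegral m f fun θ τ => sinh η * newtonKernelη A β η θ τ := by
  simp only [modeFlux, modeIntegral, ← integral_const_mul]
  congr! 2
  ring

lemma tendsto_modePotential_atTop {f : ℝ → ℝ} (hf : Continuous f) (A β : ℝ) (m : ℕ) :
    Tendsto (modePotential A β m f) atTop (𝓝 0) := by
  have hlarge := eventually_le_cosh_sq A β
  have hlim : Tendsto (modePotential A β m f) atTop (𝓝 (modeIntegral m f fun _ _ => 0)) :=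
    tendsto_modeIntegral (K := newtonKernel A β) (C := 2) hf m
      (hlarge.mono fun η hη => continuousOn_newtonKernel fun z _ => distSq_pos_of_large hη z.1 z.2)
      (hlarge.mono fun η hη z _ => (abs_newtonKernel_le_of_large hη z.1 z.2).trans
        (div_le_self zero_le_two (one_le_cosh η)))
      fun z _ => tendsto_newtonKernel_atTop A β z.1 z.2
  simpa [modeIntegral] using hlim

lemma tendsto_modeFlux_atTop {f : ℝ → ℝ} (hf : Continuous f) (A β : ℝ) (m : ℕ) :
    Tendsto (modeFlux A β m f) atTop (𝓝 (modeIntegral m f fun _ _ => -1)) := by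
  have hlarge := eventually_le_cosh_sq A β
  simp only [funext (modeFlux_eq_modeIntegral A β m f)]
  exact tendsto_modeIntegral (K := fun η θ τ => sinh η * newtonKernelη A β η θ τ) hf m
    (hlarge.mono fun η hη => continuousOn_const.mul
      (continuousOn_newtonKernelη fun z _ => distSq_pos_of_large hη z.1 z.2))
    (hlarge.mono fun η hη z _ => abs_sinh_mul_newtonKernelη_le_of_large hη z.1 z.2)
    fun z _ => tendsto_sinh_mul_newtonKernelη_atTop A β z.1 z.2

/-- Gauss's law: the total solid angle is `4π`. -/
lemma tendsto_modeFlux_const_atTop (A β : ℝ) :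
    Tendsto (modeFlux A β 0 fun _ => 1) atTop (𝓝 (-(4 * π))) := by
  have htotal : modeIntegral 0 (fun _ => 1) (fun _ _ => -1) = -(4 * π) := by
    have hint : IntegrableOn (fun z : ℝ × ℝ => sin z.1 * -1) angleRect :=
      ContinuousOn.integrableOn_compact isCompact_angleRect (by fun_prop)
    have hsin : ∫ θ in Set.Icc 0 π, sin θ = 2 := by
      rw [integral_Icc_eq_integral_Ioc, ← intervalIntegral.integral_of_le pi_pos.le, integral_sin]
      norm_num
    simp only [modeIntegral, CharP.cast_eq_zero, zero_mul, cos_zero, mul_one, one_mul]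
    rw [integral_angleRect_symm hint]
    simp only [integral_mul_const, hsin, setIntegral_const, smul_eq_mul]
    rw [volume_real_Icc_of_le (by linarith [pi_pos])]
    ring
  exact htotal ▸ tendsto_modeFlux_atTop continuous_const A β 0

lemma isBigO_iteratedDeriv_legendreQ_cosh (n m : ℕ) :
    (fun η => iteratedDeriv m (legendreQ n) (cosh η)) =O[atTop] fun η => (cosh η ^ (m + 1))⁻¹ := by
  obtain ⟨C, hC⟩ := abs_iteratedDeriv_legendreQ_mul_pow_le n m
  refine IsBigO.of_bound C ?_
  filter_upwards [tendsto_cosh_atTop.eventually_ge_atTop 2] with η hη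
  have := cosh_pos η
  rw [norm_eq_abs, norm_of_nonneg (by positivity), ← div_eq_mul_inv, le_div_iff₀ (by positivity)]
  exact hC _ hη

lemma isBigO_sinh_cosh : sinh =O[atTop] cosh := by
  refine IsBigO.of_bound' (.of_forall fun η => ?_)
  rw [norm_eq_abs, norm_of_nonneg (cosh_pos η).le]
  exact abs_sinh_le_cosh η

lemma isBigO_radialMode_legendreQ (n m : ℕ) :
    radialMode m (legendreQ n) =O[atTop] fun η => (cosh η)⁻¹ := by
  refine ((isBigO_sinh_cosh.pow m).mul (isBigO_iteratedDeriv_legendreQ_cosh n m)).congr_right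
    fun η => ?_
  have := cosh_pos η
  field_simp
  ring

lemma isBigO_radialFlux_legendreQ (n m : ℕ) :
    radialFlux m (legendreQ n) =O[atTop] fun _ => (1 : ℝ) := by
  have h₁ := ((isBigO_refl cosh atTop).const_mul_left (m : ℝ)).mul (isBigO_radialMode_legendreQ n m)
  have h₂ := (isBigO_sinh_cosh.pow (m + 2)).mul (isBigO_iteratedDeriv_legendreQ_cosh n (m + 1))
  refine (h₁.congr_right fun η => ?_).add (h₂.congr_right fun η => ?_)
  · exact mul_inv_cancel₀ (cosh_pos η).ne'
  · exact mul_inv_cancel₀ (pow_pos (cosh_pos η) _).ne'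

section OuterRegion

variable {e b : ℝ} {m : ℕ} {N : ℝ} {f : ℝ → ℝ}

lemma wronskian_modePotential_eq_of_tendsto (he : 0 < e) (hb : b ∈ Set.Ioo 0 π)
    (hf : IsAngularMode m N f) {h F : ℝ → ℝ} (hh : IsRadialMode m N (Set.Ioi 0) h F) {L : ℝ}
    (hlim : Tendsto (fun η => F η * modePotential (cosh e * cos b) (sinh e * sin b) m f η
      - h η * modeFlux (cosh e * cos b) (sinh e * sin b) m f η) atTop (𝓝 L)) {η : ℝ} (hη : e < η) :
    F η * modePotential (cosh e * cos b) (sinh e * sin b) m f η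
      - h η * modeFlux (cosh e * cos b) (sinh e * sin b) m f η = L := by
  have hpos : Set.Ioi e ⊆ Set.Ioi 0 := Set.Ioi_subset_Ioi he.le
  obtain ⟨W, hW⟩ := (hh.mono hpos).exists_wronskian_eq
    (isRadialMode_modePotential_off he hb hf isOpen_Ioi hpos Set.self_notMem_Ioi)
    isOpen_Ioi isPreconnected_Ioi
  rw [hW η hη]
  refine tendsto_nhds_unique (tendsto_const_nhds.congr' ?_) hlim
  filter_upwards [eventually_gt_atTop e] with x hx using (hW x hx).symm

lemma wronskian_modePotential_legendreQ_eq_zero (he : 0 < e) (hb : b ∈ Set.Ioo 0 π) {n : ℕ}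
    (hf : IsAngularMode m (n * (n + 1)) f) {η : ℝ} (hη : e < η) :
    radialFlux m (legendreQ n) η * modePotential (cosh e * cos b) (sinh e * sin b) m f η
      - radialMode m (legendreQ n) η * modeFlux (cosh e * cos b) (sinh e * sin b) m f η = 0 := by
  refine wronskian_modePotential_eq_of_tendsto he hb hf (isRadialMode_legendreQ n m) ?_ hη
  have hf₀ := hf.contDiff.continuous
  have hQ : Tendsto (radialMode m (legendreQ n)) atTop (𝓝 0) :=
    (isBigO_radialMode_legendreQ n m).trans_tendsto tendsto_inv_cosh_atTop
  have hFg := (isBigO_radialFlux_legendreQ n m).mul_isLittleO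
    ((isLittleO_one_iff ℝ).2
      (tendsto_modePotential_atTop hf₀ (cosh e * cos b) (sinh e * sin b) m))
  have hhG := hQ.mul (tendsto_modeFlux_atTop hf₀ (cosh e * cos b) (sinh e * sin b) m)
  rw [mul_one, isLittleO_one_iff] at hFg
  simpa only [zero_mul, sub_zero] using hFg.sub hhG

lemma modeFlux_const_eq_of_lt (he : 0 < e) (hb : b ∈ Set.Ioo 0 π) {η : ℝ} (hη : e < η) :
    modeFlux (cosh e * cos b) (sinh e * sin b) 0 (fun _ => 1) η = -(4 * π) := by
  have hW := wronskian_modePotential_eq_of_tendsto he hb isAngularMode_const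
    (isRadialMode_const (Set.Ioi 0)) (L := 4 * π)
    (by simpa using (tendsto_modeFlux_const_atTop (cosh e * cos b) (sinh e * sin b)).neg) hη
  linarith

end OuterRegion

end FarField

section NearField

open Filter Topology

lemma one_add_sq_half_le_cosh (x : ℝ) : 1 + x ^ 2 / 2 ≤ cosh x := by
  have hle : |x / 2| ≤ |sinh (x / 2)| := by
    rw [abs_sinh]
    exact self_le_sinh_iff.2 (abs_nonneg _)
  have hdouble : cosh x = 2 * sinh (x / 2) ^ 2 + 1 := by
    rw [← mul_div_cancel₀ x two_ne_zero, cosh_two_mul, cosh_sq, mul_div_cancel₀ x two_ne_zero]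
    ring
  linarith [sq_le_sq.2 hle]

lemma sq_add_sq_le_cosh_sub_cos (x : ℝ) {y : ℝ} (hy : |y| ≤ π) :
    2 / π ^ 2 * (x ^ 2 + y ^ 2) ≤ cosh x - cos y := by
  have hπ : 2 / π ^ 2 ≤ 1 / 2 := by
    rw [div_le_div_iff₀ (by positivity) two_pos]
    linarith [pow_le_pow_left₀ zero_le_three pi_gt_three.le 2]
  linarith [one_add_sq_half_le_cosh x, cos_le_one_sub_mul_cos_sq hy,
    mul_le_mul_of_nonneg_right hπ (sq_nonneg x)]

variable {e b : ℝ}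

lemma exists_sq_add_sq_le_mul_distSq (he : 0 < e) (hb : b ∈ Set.Ioo 0 π) :
    ∃ κ > 0, ∀ η ∈ Set.Icc (e / 2) (e + 1), ∀ z ∈ angleRect,
      (η - e) ^ 2 + (z.1 - b) ^ 2 + sin z.1 * z.2 ^ 2
        ≤ κ * distSq (cosh e * cos b) (sinh e * sin b) η z.1 z.2 := by
  have : 0 < sinh e := sinh_pos_iff.2 he
  have : 0 < sinh (e / 2) := sinh_pos_iff.2 (by positivity)
  have hsin_b := sin_pos_of_mem_Ioo hb
  set c := min (cosh e - 1) (2 * (sinh (e / 2) * sinh e * sin b))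
  have hc : 0 < c := lt_min (sub_pos.2 (one_lt_cosh.2 he.ne')) (by positivity)
  refine ⟨(c * (2 / π ^ 2))⁻¹, by positivity, fun η hη z hz => ?_⟩
  rw [inv_mul_eq_div, le_div_iff₀ (by positivity), distSq_eq_mul_add]
  have hsin := sin_nonneg_of_mem_Icc hz.1
  have hfar : c ≤ cosh (η + e) - cos (z.1 + b) := by
    have hcosh : cosh e ≤ cosh (η + e) := by
      rw [cosh_le_cosh, abs_of_pos he]
      exact le_abs.2 (.inl (by linarith [hη.1]))
    exact (min_le_left _ _).trans (by linarith [cos_le_one (z.1 + b)])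
  have hnear : 2 / π ^ 2 * ((η - e) ^ 2 + (z.1 - b) ^ 2) ≤ cosh (η - e) - cos (z.1 - b) :=
    sq_add_sq_le_cosh_sub_cos _ (abs_le.2 ⟨by linarith [hz.1.1, hb.2], by linarith [hz.1.2, hb.1]⟩)
  have hτ : 2 / π ^ 2 * z.2 ^ 2 ≤ 1 - cos z.2 := by
    simpa using sq_add_sq_le_cosh_sub_cos 0 (abs_le.2 hz.2)
  have hη_sinh : c ≤ 2 * (sinh η * sinh e * sin b) :=
    (min_le_right _ _).trans (by gcongr; exact sinh_le_sinh.2 hη.1)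
  have hprod₁ := mul_le_mul hfar hnear (by positivity) (hc.le.trans hfar)
  have hprod₂ := mul_le_mul_of_nonneg_left
    (mul_le_mul hη_sinh hτ (by positivity) (hc.le.trans hη_sinh)) hsin
  linarith

section Inequalities

variable {s x y t ρ : ℝ}

lemma mul_max_abs_le_sqrt_mul (hs : 0 ≤ s) (hs_one : s ≤ 1) (hρ : 0 ≤ ρ)
    (hle : x ^ 2 + y ^ 2 + s * t ^ 2 ≤ ρ ^ 2) : s * max |x| (max |y| |t|) ≤ √s * ρ := by
  have hst : 0 ≤ s * t ^ 2 := by positivity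
  have hsqrt_one : √s ≤ 1 := sqrt_le_one.2 hs_one
  have hx : |x| ≤ ρ := abs_le_of_sq_le_sq (by linarith [sq_nonneg y]) hρ
  have hy : |y| ≤ ρ := abs_le_of_sq_le_sq (by linarith [sq_nonneg x]) hρ
  have ht : √s * |t| ≤ ρ := by
    refine abs_le_of_sq_le_sq' ?_ hρ |>.2
    rw [mul_pow, sq_sqrt hs, sq_abs]
    linarith [sq_nonneg x, sq_nonneg y]
  nth_rw 1 [← mul_self_sqrt hs, mul_assoc]
  gcongr
  rw [mul_max_of_nonneg _ _ (sqrt_nonneg s), mul_max_of_nonneg _ _ (sqrt_nonneg s)]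
  exact max_le ((mul_le_of_le_one_left (abs_nonneg x) hsqrt_one).trans hx)
    (max_le ((mul_le_of_le_one_left (abs_nonneg y) hsqrt_one).trans hy) ht)

lemma sqrt_mul_sqrt_mul_sqrt_le (hs : 0 ≤ s) (hs_one : s ≤ 1) (hρ : 0 ≤ ρ)
    (hle : x ^ 2 + y ^ 2 + s * t ^ 2 ≤ ρ ^ 2) : √s * √|y| * √|t| ≤ ρ := by
  refine abs_le_of_sq_le_sq' ?_ hρ |>.2
  rw [mul_pow, mul_pow, sq_sqrt hs, sq_sqrt (abs_nonneg y), sq_sqrt (abs_nonneg t)]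
  have hamgm : s * (|y| * |t|) ≤ s * ((y ^ 2 + t ^ 2) / 2) := by
    gcongr
    linarith [two_mul_le_add_sq |y| |t|, sq_abs y, sq_abs t]
  have hst : 0 ≤ s * t ^ 2 := by positivity
  linarith [mul_le_of_le_one_left (sq_nonneg y) hs_one, sq_nonneg x, sq_nonneg y]

end Inequalities

/-- The integrand of the Wronskian of a radial mode `h` with flux `F` and the mode `(f, m)` of the
potential, from which the value `h e * f b` at the target has been subtracted where it multiplies
the more singular kernel, so that it stays integrable as `η → e`. -/
def jumpIntegrand (e b : ℝ) (m : ℕ) (f h F : ℝ → ℝ) (η : ℝ) (z : ℝ × ℝ) : ℝ :=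
  sin z.1 * (F η * f z.1 * cos (m * z.2)
      * newtonKernel (cosh e * cos b) (sinh e * sin b) η z.1 z.2
    - (h η * f z.1 * cos (m * z.2) - h e * f b)
      * (sinh η * newtonKernelη (cosh e * cos b) (sinh e * sin b) η z.1 z.2))

variable {m : ℕ} {f h F : ℝ → ℝ} {η : ℝ}

lemma continuousOn_jumpIntegrand (hf : Continuous f)
    (hpos : ∀ z ∈ angleRect, 0 < distSq (cosh e * cos b) (sinh e * sin b) η z.1 z.2) :
    ContinuousOn (jumpIntegrand e b m f h F η) angleRect := by
  have := continuousOn_newtonKernel hpos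
  have := continuousOn_newtonKernelη hpos
  unfold jumpIntegrand
  fun_prop

lemma continuousAt_jumpIntegrand (hh : ContinuousAt h e) (hF : ContinuousAt F e) {z : ℝ × ℝ}
    (hpos : 0 < distSq (cosh e * cos b) (sinh e * sin b) e z.1 z.2) :
    ContinuousAt (fun η => jumpIntegrand e b m f h F η z) e := by
  have hk := (hasDerivAt_invSqrt (hasDerivAt_distSq_eta _ _ e z.1 z.2) hpos).continuousAt
  have hkη := (hasDerivAt_invSqrtD (r' := fun η => distSqη _ _ η z.1 z.2)
    (hasDerivAt_distSq_eta _ _ e z.1 z.2) (hasDerivAt_distSqη _ _ e z.1 z.2) hpos).continuousAt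
  unfold jumpIntegrand newtonKernel newtonKernelη
  fun_prop

lemma integral_jumpIntegrand (hf : Continuous f)
    (hpos : ∀ z ∈ angleRect, 0 < distSq (cosh e * cos b) (sinh e * sin b) η z.1 z.2) :
    ∫ z in angleRect, jumpIntegrand e b m f h F η z
      = F η * modePotential (cosh e * cos b) (sinh e * sin b) m f η
        - h η * modeFlux (cosh e * cos b) (sinh e * sin b) m f η
        + h e * f b * modeFlux (cosh e * cos b) (sinh e * sin b) 0 (fun _ => 1) η := by
  have hk := (integrableOn_mode_mul hf m (continuousOn_newtonKernel hpos)).const_mul (F η)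
  have hkη := (integrableOn_mode_mul hf m (continuousOn_newtonKernelη hpos)).const_mul
    (h η * sinh η)
  have hkη_const := (integrableOn_mode_mul (f := fun _ => 1) continuous_const 0
    (continuousOn_newtonKernelη hpos)).const_mul (h e * f b * sinh η)
  simp only [modeFlux, modePotential, modeIntegral, ← mul_assoc, ← integral_const_mul]
  simp only [← mul_assoc] at hk hkη hkη_const
  rw [← integral_sub hk hkη, ← integral_add (by exact hk.sub hkη) hkη_const]
  refine integral_congr_ae (.of_forall fun z => ?_)
  simp only [jumpIntegrand, CharP.cast_eq_zero, zero_mul, cos_zero]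
  ring

lemma exists_abs_sub_le_mul_max (m : ℕ) (hf : ContDiff ℝ 1 f) (hh : ContDiff ℝ 1 h) (he : 0 < e)
    (hb : b ∈ Set.Ioo 0 π) : ∃ L ≥ 0, ∀ η ∈ Set.Icc (e / 2) (e + 1), ∀ z ∈ angleRect,
      |h η * f z.1 * cos (m * z.2) - h e * f b|
        ≤ L * max |η - e| (max |z.1 - b| |z.2|) := by
  have hsmooth : ContDiff ℝ 1 fun w : ℝ × ℝ × ℝ => h w.1 * f w.2.1 * cos (m * w.2.2) := by
    fun_prop
  obtain ⟨L, hL⟩ := hsmooth.contDiffOn.exists_lipschitzOnWith one_ne_zero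
    ((convex_Icc (e / 2) (e + 1)).prod ((convex_Icc 0 π).prod (convex_Icc (-π) π)))
    (isCompact_Icc.prod isCompact_angleRect)
  refine ⟨L, L.2, fun η hη z hz => ?_⟩
  have hcenter : (e, b, 0) ∈ Set.Icc (e / 2) (e + 1) ×ˢ Set.Icc 0 π ×ˢ Set.Icc (-π) π :=
    ⟨⟨by linarith, by linarith⟩, Set.Ioo_subset_Icc_self hb, by linarith [pi_pos], pi_pos.le⟩
  simpa [dist_eq, Prod.dist_eq] using hL.dist_le_mul (η, z) ⟨hη, hz⟩ _ hcenter

lemma abs_mul_sub_mul_le {s x y t S κ w k δ l M L H : ℝ} (hs : 0 ≤ s) (hs_one : s ≤ 1) (hS : 0 < S)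
    (hκ : 0 ≤ κ) (hle : x ^ 2 + y ^ 2 + s * t ^ 2 ≤ (κ * S) ^ 2) (hy : y ≠ 0) (ht : t ≠ 0)
    (hM : 0 ≤ M) (hL : 0 ≤ L) (hH : 0 ≤ H) (hw : |w| ≤ M) (hk : |k| ≤ 1 / S)
    (hδ : |δ| ≤ L * max |x| (max |y| |t|)) (hl : |l| ≤ H / S ^ 2) :
    |s * (w * k - δ * l)| ≤ (M + L * κ * H) * κ * ((√|y|)⁻¹ * (√|t|)⁻¹) := by
  have : 0 < √|y| := sqrt_pos.2 (abs_pos.2 hy)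
  have : 0 < √|t| := sqrt_pos.2 (abs_pos.2 ht)
  have hs_sqrt : s ≤ √s := le_sqrt_of_sq_le (by rw [sq]; exact mul_le_of_le_one_left hs hs_one)
  calc |s * (w * k - δ * l)| ≤ s * (|w| * |k| + |δ| * |l|) := by
        rw [abs_mul, abs_of_nonneg hs, ← abs_mul w, ← abs_mul δ]
        gcongr
        exact abs_sub _ _
    _ ≤ s * (M * (1 / S) + L * max |x| (max |y| |t|) * (H / S ^ 2)) := by gcongr
    _ = s * (M / S) + s * max |x| (max |y| |t|) * (L * H / S ^ 2) := by ring
    _ ≤ √s * (M / S) + √s * (κ * S) * (L * H / S ^ 2) := by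
        gcongr ?_ * _ + ?_ * _
        exact mul_max_abs_le_sqrt_mul hs hs_one (by positivity) hle
    _ = (M + L * κ * H) * ((√s * √|y| * √|t|) / S) * ((√|y|)⁻¹ * (√|t|)⁻¹) := by field_simp
    _ ≤ (M + L * κ * H) * (κ * S / S) * ((√|y|)⁻¹ * (√|t|)⁻¹) := by
        gcongr _ * (?_ / _) * _
        exact sqrt_mul_sqrt_mul_sqrt_le hs hs_one (by positivity) hle
    _ = _ := by rw [mul_div_cancel_right₀ κ hS.ne']

lemma exists_abs_jumpIntegrand_le (m : ℕ) (hf : ContDiff ℝ 1 f) (hh : ContDiff ℝ 1 h)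
    (hF : Continuous F) (he : 0 < e) (hb : b ∈ Set.Ioo 0 π) :
    ∃ C, ∀ η ∈ Set.Icc (e / 2) (e + 1), ∀ z ∈ angleRect, z.1 ≠ b → z.2 ≠ 0 →
      |jumpIntegrand e b m f h F η z| ≤ C * ((√|z.1 - b|)⁻¹ * (√|z.2|)⁻¹) := by
  obtain ⟨κ, hκ, hnear⟩ := exists_sq_add_sq_le_mul_distSq he hb
  obtain ⟨L, hL, hlip⟩ := exists_abs_sub_le_mul_max m hf hh he hb
  have hf₀ := hf.continuous
  obtain ⟨M, hM⟩ := ((isCompact_Icc (a := e / 2) (b := e + 1)).prod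
    isCompact_angleRect).exists_bound_of_continuousOn
    (f := fun w : ℝ × ℝ × ℝ => F w.1 * f w.2.1 * cos (m * w.2.2)) (by fun_prop)
  refine ⟨(|M| + L * √κ * cosh (e + 1) ^ 2) * √κ, fun η hη z hz hzb hz0 => ?_⟩
  have hle := hnear η hη z hz
  set R := distSq (cosh e * cos b) (sinh e * sin b) η z.1 z.2
  have hsin := sin_nonneg_of_mem_Icc hz.1
  have hR : 0 < R := by
    have := sq_pos_of_ne_zero (sub_ne_zero.2 hzb)
    exact pos_of_mul_pos_right (lt_of_lt_of_le (by positivity) hle) hκ.le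
  have hcosh : cosh η ≤ cosh (e + 1) := by
    rw [cosh_le_cosh, abs_of_pos (by linarith [hη.1]), abs_of_pos (by linarith)]
    exact hη.2
  refine abs_mul_sub_mul_le hsin (sin_le_one z.1) (sqrt_pos.2 hR) (sqrt_nonneg κ)
    (by rwa [mul_pow, sq_sqrt hκ.le, sq_sqrt hR.le]) (sub_ne_zero.2 hzb) hz0 (abs_nonneg M) hL
    (by positivity) ((hM (η, z) ⟨hη, hz⟩).trans (le_abs_self M)) ?_ (hlip η hη z hz) ?_
  · rw [newtonKernel, one_div, abs_of_nonneg (by positivity)]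
  · rw [abs_mul, sq_sqrt hR.le, sq, mul_div_assoc]
    have := cosh_pos η
    exact mul_le_mul ((abs_sinh_le_cosh η).trans hcosh)
      ((abs_newtonKernelη_le hR).trans (by gcongr)) (abs_nonneg _) (by positivity)

lemma integrableOn_inv_sqrt_abs_sub {l c r : ℝ} (hl : l ≤ c) (hr : c ≤ r) :
    IntegrableOn (fun x => (√|x - c|)⁻¹) (Set.Icc l r) := by
  have hright {d : ℝ} (hd : 0 ≤ d) :
      IntervalIntegrable (fun x => (√|x|)⁻¹) volume 0 d := by
    refine (intervalIntegral.intervalIntegrable_rpow' (r := -(1 / 2)) (by norm_num)).congr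
      fun x hx => ?_
    rw [Set.uIoc_of_le hd] at hx
    simp only [rpow_neg hx.1.le, ← sqrt_eq_rpow, abs_of_pos hx.1]
  have hleft : IntervalIntegrable (fun x => (√|x|)⁻¹) volume 0 (l - c) := by
    simpa using (IntervalIntegrable.iff_comp_neg (by simp)).1 (hright (sub_nonneg.2 hl))
  have hint := (hleft.symm.trans (hright (sub_nonneg.2 hr))).comp_sub_right c
  rw [sub_add_cancel, sub_add_cancel] at hint
  rw [integrableOn_Icc_iff_integrableOn_Ioc]
  exact (intervalIntegrable_iff_integrableOn_Ioc_of_le (hl.trans hr)).1 hint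

lemma integrableOn_inv_sqrt_mul_inv_sqrt (hb : b ∈ Set.Ioo 0 π) :
    IntegrableOn (fun z : ℝ × ℝ => (√|z.1 - b|)⁻¹ * (√|z.2|)⁻¹) angleRect := by
  have hτ := integrableOn_inv_sqrt_abs_sub (neg_nonpos.2 pi_pos.le) pi_pos.le
  simp only [sub_zero] at hτ
  have := (integrableOn_inv_sqrt_abs_sub hb.1.le hb.2.le).mul_prod hτ
  rwa [Measure.prod_restrict] at this

lemma ae_angleRect_ne (b : ℝ) :
    ∀ᵐ z ∂volume.restrict angleRect, z ∈ angleRect ∧ z.1 ≠ b ∧ z.2 ≠ 0 := by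
  have hfst : ∀ᵐ z : ℝ × ℝ, z.1 ≠ b :=
    Measure.quasiMeasurePreserving_fst.ae (Measure.ae_ne volume b)
  have hsnd : ∀ᵐ z : ℝ × ℝ, z.2 ≠ 0 :=
    Measure.quasiMeasurePreserving_snd.ae (Measure.ae_ne volume 0)
  exact (ae_restrict_mem isCompact_angleRect.measurableSet).and
    ((ae_restrict_of_ae hfst).and (ae_restrict_of_ae hsnd))

lemma tendsto_integral_jumpIntegrand (m : ℕ) (hf : ContDiff ℝ 1 f) (hh : ContDiff ℝ 1 h)
    (hF : Continuous F) (he : 0 < e) (hb : b ∈ Set.Ioo 0 π) :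
    Tendsto (fun η => ∫ z in angleRect, jumpIntegrand e b m f h F η z) (𝓝[≠] e)
      (𝓝 (∫ z in angleRect, jumpIntegrand e b m f h F e z)) := by
  obtain ⟨C, hC⟩ := exists_abs_jumpIntegrand_le m hf hh hF he hb
  obtain ⟨κ, hκ, hnear⟩ := exists_sq_add_sq_le_mul_distSq he hb
  have hevent : ∀ᶠ η in 𝓝[≠] e, η ∈ Set.Icc (e / 2) (e + 1) :=
    nhdsWithin_le_nhds (Icc_mem_nhds (by linarith) (by linarith))
  refine tendsto_integral_filter_of_dominated_convergence _ ?_ ?_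
    ((integrableOn_inv_sqrt_mul_inv_sqrt hb).const_mul C) ?_
  · filter_upwards [hevent, self_mem_nhdsWithin] with η hη hne
    refine (continuousOn_jumpIntegrand hf.continuous fun z hz => distSq_pos he hb ?_ hz)
      |>.aestronglyMeasurable isCompact_angleRect.measurableSet
    rwa [abs_of_pos (by linarith [hη.1])]
  · filter_upwards [hevent] with η hη
    filter_upwards [ae_angleRect_ne b] with z ⟨hz, hzb, hz0⟩
    exact hC η hη z hz hzb hz0
  · filter_upwards [ae_angleRect_ne b] with z ⟨hz, hzb, hz0⟩
    have hsin := sin_nonneg_of_mem_Icc hz.1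
    have := sq_pos_of_ne_zero (sub_ne_zero.2 hzb)
    have hpos : 0 < distSq (cosh e * cos b) (sinh e * sin b) e z.1 z.2 :=
      pos_of_mul_pos_right (lt_of_lt_of_le (by positivity)
        (hnear e ⟨by linarith, by linarith⟩ z hz)) hκ.le
    exact (continuousAt_jumpIntegrand hh.continuous.continuousAt hF.continuousAt
      hpos).tendsto.mono_left nhdsWithin_le_nhds

end NearField

section Jump

open Filter Topology

variable {e b : ℝ} {m : ℕ}

lemma wronskian_modePotential_eq_four_pi_mul {N : ℝ} {f h F : ℝ → ℝ} (he : 0 < e)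
    (hb : b ∈ Set.Ioo 0 π) (hf : IsAngularMode m N f) (hh : IsRadialMode m N (Set.Ioi 0) h F)
    (hh₁ : ContDiff ℝ 1 h) (hFc : Continuous F) (hF : F 0 = 0) {η : ℝ} (hη : e < η) :
    F η * modePotential (cosh e * cos b) (sinh e * sin b) m f η
      - h η * modeFlux (cosh e * cos b) (sinh e * sin b) m f η = 4 * π * (h e * f b) := by
  have hlim := tendsto_integral_jumpIntegrand m (hf.contDiff.of_le one_le_two) hh₁ hFc he hb
  set L := ∫ z in angleRect, jumpIntegrand e b m f h F e z
  have hjump {η : ℝ} (hη : 0 < η) (hne : η ≠ e) :=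
    integral_jumpIntegrand (h := h) (F := F) (m := m) hf.contDiff.continuous
      fun z hz => distSq_pos he hb (by rwa [abs_of_pos hη]) hz
  have hinner : Tendsto (fun η => ∫ z in angleRect, jumpIntegrand e b m f h F η z)
      (𝓝[<] e) (𝓝 0) := by
    refine tendsto_const_nhds.congr' ?_
    filter_upwards [Ioo_mem_nhdsLT he] with η hη
    have hW := wronskian_modePotential_eq_zero_of_lt he hb hf hh hh₁.continuous.continuousAt
      hFc.continuousAt hF hη
    have hW₀ := wronskian_modePotential_eq_zero_of_lt he hb isAngularMode_const
      (isRadialMode_const (Set.Ioi 0)) continuousAt_const continuousAt_const rfl hη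
    rw [hjump hη.1 hη.2.ne]
    linear_combination -hW + h e * f b * hW₀
  have hL : L = 0 := tendsto_nhds_unique (hlim.mono_left (nhdsLT_le_nhdsNE e)) hinner
  obtain ⟨W, hW⟩ := (hh.mono (Set.Ioi_subset_Ioi he.le)).exists_wronskian_eq
    (isRadialMode_modePotential_off he hb hf isOpen_Ioi (Set.Ioi_subset_Ioi he.le)
      Set.self_notMem_Ioi) isOpen_Ioi isPreconnected_Ioi
  have houter : Tendsto (fun η => ∫ z in angleRect, jumpIntegrand e b m f h F η z)
      (𝓝[>] e) (𝓝 (W - 4 * π * (h e * f b))) := by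
    refine tendsto_const_nhds.congr' ?_
    filter_upwards [self_mem_nhdsWithin] with η (hη : e < η)
    rw [hjump (he.trans hη) hη.ne', hW η hη, modeFlux_const_eq_of_lt he hb hη]
    ring
  have hL' := tendsto_nhds_unique (hlim.mono_left (nhdsGT_le_nhdsNE e)) houter
  rw [hW η hη]
  linarith

lemma contDiff_radialMode_legendreP (n m : ℕ) : ContDiff ℝ 1 (radialMode m (legendreP n)) :=
  (contDiff_sinh.pow m).mul ((contDiff_iteratedDeriv_legendreP n m).comp contDiff_cosh)

lemma modeFlux_angularMode_eq {n : ℕ} (hm : m ≤ n) (he : 0 < e) (hb : b ∈ Set.Ioo 0 π) {η : ℝ}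
    (hη : e < η) :
    modeFlux (cosh e * cos b) (sinh e * sin b) m (angularMode n m) η
      = 4 * π * ((-1) ^ m * ((n - m).factorial / (n + m).factorial)
        * radialFlux m (legendreQ n) η * radialMode m (legendreP n) e * angularMode n m b) := by
  have hf := isAngularMode_angularMode n m
  have hP := wronskian_modePotential_eq_four_pi_mul he hb hf (isRadialMode_legendreP n m)
    (contDiff_radialMode_legendreP n m) (continuous_radialFlux_legendreP n m)
    (radialFlux_zero m _) hη
  have hQ := wronskian_modePotential_legendreQ_eq_zero he hb hf hη
  have hPQ := radial_wronskian_eq_legendreWronskian n m η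
  have hW := legendreWronskian_mul_factorial hm (one_lt_cosh.2 (he.trans hη).ne')
  have hsign : ((-1 : ℝ) ^ m) ^ 2 = 1 := by rw [pow_right_comm, neg_one_sq, one_pow]
  have hfact : ((n + m).factorial : ℝ) ≠ 0 := mod_cast (n + m).factorial_ne_zero
  set G := modeFlux (cosh e * cos b) (sinh e * sin b) m (angularMode n m) η
  have hG : G * ((-1) ^ m * (n + m).factorial) = 4 * π * ((n - m).factorial
      * radialFlux m (legendreQ n) η * radialMode m (legendreP n) e * angularMode n m b) := by
    linear_combination (n - m).factorial * (radialFlux m (legendreQ n) η * hP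
      - radialFlux m (legendreP n) η * hQ + G * hPQ) + G * hW
  field_simp
  linear_combination (-1) ^ m * hG - G * (n + m).factorial * hsign

end Jump

section Geometry

variable {a η θ : ℝ}

lemma sqrt_cosh_sq_sub_one (hη : 0 ≤ η) : √(cosh η ^ 2 - 1) = sinh η := by
  rw [← sinh_sq, sqrt_sq (sinh_nonneg_iff.2 hη)]

lemma sqrt_one_sub_cos_sq (hθ : θ ∈ Set.Icc 0 π) : √(1 - cos θ ^ 2) = sin θ :=
  (sin_eq_sqrt_one_sub_cos_sq hθ.1 hθ.2).symm

lemma assocP_cosh (n m : ℕ) (hη : 0 ≤ η) :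
    assocP n m (cosh η) = radialMode m (legendreP n) η := by
  rw [assocP, sqrt_cosh_sq_sub_one hη, radialMode]

lemma ferrersP_cos (n m : ℕ) (hθ : θ ∈ Set.Icc 0 π) :
    ferrersP n m (cos θ) = angularMode n m θ := by
  rw [ferrersP, sqrt_one_sub_cos_sq hθ, angularMode]

lemma deriv_assocQ_cosh (n m : ℕ) (hη : 0 < η) :
    deriv (assocQ n m) (cosh η) = radialFlux m (legendreQ n) η / sinh η ^ 2 := by
  have hx : 1 < cosh η := one_lt_cosh.2 hη.ne'
  have harcosh := hasDerivAt_arcosh hx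
  have hmode := (isRadialMode_legendreQ n m).hasDerivAt η hη
  rw [sqrt_cosh_sq_sub_one hη.le] at harcosh
  rw [← arcosh_cosh hη.le] at hmode
  have hcomp := hmode.comp _ harcosh
  rw [arcosh_cosh hη.le] at hcomp
  refine (hcomp.congr_of_eventuallyEq ?_).deriv.trans (by ring)
  filter_upwards [Ioi_mem_nhds hx] with x (hx : 1 < x)
  rw [assocQ, Function.comp_apply, radialMode, sinh_arcosh hx.le, cosh_arcosh hx.le]

lemma prolate_cosh_cos (a : ℝ) (hη : 0 ≤ η) (hθ : θ ∈ Set.Icc 0 π) (t : ℝ) :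
    prolate a (cosh η) (cos θ) t
      = a • !₂[sinh η * sin θ * cos t, sinh η * sin θ * sin t, cosh η * cos θ] := by
  ext i
  fin_cases i <;> simp [prolate, sqrt_cosh_sq_sub_one hη, sqrt_one_sub_cos_sq hθ] <;> ring

/-- The derivative in `η` of `Φ(cosh η, cos θ, t)`, in units of `a`: an outward normal vector of the
spheroid `u = cosh η`. -/
def prolateNormal (η θ t : ℝ) : EuclideanSpace ℝ (Fin 3) :=
  !₂[cosh η * sin θ * cos t, cosh η * sin θ * sin t, sinh η * cos θ]

lemma norm_prolateNormal (η θ t : ℝ) :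
    ‖prolateNormal η θ t‖ = √(cosh η ^ 2 - cos θ ^ 2) := by
  rw [EuclideanSpace.norm_eq, Fin.sum_univ_three]
  congr 1
  simp only [prolateNormal, Fin.isValue, Matrix.cons_val_zero, Matrix.cons_val_one, Matrix.cons_val,
    norm_mul, norm_eq_abs, mul_pow, sq_abs]
  linear_combination cosh η ^ 2 * sin θ ^ 2 * sin_sq_add_cos_sq t
    + cosh η ^ 2 * sin_sq_add_cos_sq θ - cos θ ^ 2 * cosh_sq η

lemma deriv_prolate (a : ℝ) (hη : 0 < η) (hθ : θ ∈ Set.Icc 0 π) (t : ℝ) :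
    deriv (fun w => prolate a w (cos θ) t) (cosh η) = (a / sinh η) • prolateNormal η θ t := by
  have := sinh_pos_iff.2 hη
  have hsqrt : HasDerivAt (fun w : ℝ => √(w ^ 2 - 1)) (cosh η / sinh η) (cosh η) := by
    have hpos : cosh η ^ 2 - 1 ≠ 0 := by rw [← sinh_sq]; positivity
    have hsq : HasDerivAt (fun w : ℝ => w ^ 2 - 1) (2 * cosh η) (cosh η) := by
      simpa using (hasDerivAt_pow 2 (cosh η)).sub_const 1
    refine (hsq.sqrt hpos).congr_deriv ?_
    rw [sqrt_cosh_sq_sub_one hη.le, mul_div_mul_left _ _ two_ne_zero]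
  have hsplit (w : ℝ) : prolate a w (cos θ) t
      = √(w ^ 2 - 1) • !₂[a * sin θ * cos t, a * sin θ * sin t, 0] + w • !₂[0, 0, a * cos θ] := by
    ext i
    fin_cases i <;> simp [prolate, sqrt_one_sub_cos_sq hθ] <;> ring
  simp only [hsplit]
  refine ((hsqrt.smul_const _).fun_add ((hasDerivAt_id _).smul_const _)).deriv.trans ?_
  ext i
  fin_cases i <;> simp [prolateNormal] <;> field_simp

lemma areaElemP_smul_unitNormalP (ha : 0 < a) (hη : 0 < η) (hθ : θ ∈ Set.Icc 0 π) (t : ℝ) :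
    areaElemP a (cosh η) (cos θ) • unitNormalP a (cosh η) (cos θ) t
      = (a ^ 2 * sinh η) • prolateNormal η θ t := by
  have hsinh := sinh_pos_iff.2 hη
  have hpos : 0 < √(cosh η ^ 2 - cos θ ^ 2) :=
    sqrt_pos.2 (by nlinarith [cos_sq_le_one θ, cosh_sq η])
  rw [unitNormalP, deriv_prolate a hη hθ, norm_smul, norm_prolateNormal, areaElemP,
    sqrt_cosh_sq_sub_one hη.le, norm_of_nonneg (by positivity), smul_smul, smul_smul]
  congr 1
  field_simp

lemma norm_prolate_sub_prolate {e b : ℝ} (he : 0 ≤ e) (hb : b ∈ Set.Icc 0 π) (φ t : ℝ)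
    (ha : 0 ≤ a) (hη : 0 ≤ η) (hθ : θ ∈ Set.Icc 0 π) :
    ‖prolate a (cosh e) (cos b) φ - prolate a (cosh η) (cos θ) t‖
      = a * √(distSq (cosh e * cos b) (sinh e * sin b) η θ (t - φ)) := by
  rw [prolate_cosh_cos a he hb, prolate_cosh_cos a hη hθ, ← smul_sub, norm_smul, norm_of_nonneg ha,
    EuclideanSpace.norm_eq, Fin.sum_univ_three, distSq, cos_sub]
  congr 2
  simp only [Fin.isValue, PiLp.sub_apply, Matrix.cons_val_zero, Matrix.cons_val_one,
    Matrix.cons_val, norm_eq_abs, sq_abs]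
  linear_combination sinh η ^ 2 * sin θ ^ 2 * sin_sq_add_cos_sq t
    + sinh e ^ 2 * sin b ^ 2 * sin_sq_add_cos_sq φ + cosh η ^ 2 * sin_sq_add_cos_sq θ
    - sin θ ^ 2 * cosh_sq η

lemma inner_prolateNormal_prolate_sub {e b : ℝ} (he : 0 ≤ e) (hb : b ∈ Set.Icc 0 π) (φ t : ℝ)
    (hη : 0 ≤ η) (hθ : θ ∈ Set.Icc 0 π) :
    inner ℝ (prolateNormal η θ t)
        (prolate a (cosh e) (cos b) φ - prolate a (cosh η) (cos θ) t)
      = -(a / 2) * distSqη (cosh e * cos b) (sinh e * sin b) η θ (t - φ) := by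
  rw [prolate_cosh_cos a he hb, prolate_cosh_cos a hη hθ, ← smul_sub, inner_smul_right,
    PiLp.inner_apply, Fin.sum_univ_three, distSqη, cos_sub]
  simp only [prolateNormal, Fin.isValue, PiLp.sub_apply, Matrix.cons_val_zero,
    Matrix.cons_val_one, Matrix.cons_val, RCLike.inner_apply, ringHom_apply]
  linear_combination -(a * cosh η * sinh η) * (sin θ ^ 2 * sin_sq_add_cos_sq t
    + sin_sq_add_cos_sq θ)

lemma doubleLayer_kernel_mul_areaElemP {e b : ℝ} (he : 0 ≤ e) (hb : b ∈ Set.Icc 0 π) (φ t : ℝ)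
    (ha : 0 < a) (hη : 0 < η) (hθ : θ ∈ Set.Icc 0 π) :
    inner ℝ (unitNormalP a (cosh η) (cos θ) t)
        (prolate a (cosh e) (cos b) φ - prolate a (cosh η) (cos θ) t)
        / (4 * π * ‖prolate a (cosh e) (cos b) φ - prolate a (cosh η) (cos θ) t‖ ^ 3)
        * areaElemP a (cosh η) (cos θ)
      = sinh η / (4 * π)
        * newtonKernelη (cosh e * cos b) (sinh e * sin b) η θ (t - φ) := by
  rw [div_mul_eq_mul_div, mul_comm (inner ℝ _ _), ← real_inner_smul_left,
    areaElemP_smul_unitNormalP ha hη hθ, real_inner_smul_left,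
    inner_prolateNormal_prolate_sub he hb φ t hη.le hθ,
    norm_prolate_sub_prolate he hb φ t ha.le hη.le hθ, newtonKernelη, invSqrtD]
  field_simp

end Geometry

section Assembly

lemma integral_sin_smul_comp_cos {E : Type*} [NormedAddCommGroup E] [NormedSpace ℝ E] (g : ℝ → E) :
    ∫ θ in (0 : ℝ)..π, sin θ • g (cos θ) = ∫ v in (-1 : ℝ)..1, g v := by
  have hsubst := intervalIntegral.integral_deriv_smul_comp_of_deriv_nonpos (a := 0) (b := π)
    (g := g) continuous_cos.continuousOn (fun θ _ => hasDerivAt_cos θ) fun θ hθ => by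
      rw [min_eq_left pi_pos.le, max_eq_right pi_pos.le] at hθ
      exact neg_nonpos.2 (sin_pos_of_mem_Ioo hθ).le
  rw [cos_zero, cos_pi, intervalIntegral.integral_symm (-1) 1] at hsubst
  simpa using hsubst

lemma integral_mul_exp_eq_integral_cos_mul {h : ℝ → ℝ} (hint : IntervalIntegrable h volume (-π) π)
    (heven : Function.Even h) (m : ℕ) :
    ∫ τ in (-π)..π, (h τ : ℂ) * Complex.exp (Complex.I * m * τ)
      = ((∫ τ in (-π)..π, cos (m * τ) * h τ : ℝ) : ℂ) := by
  set k : ℝ → ℂ := fun τ => (h τ : ℂ) * Complex.exp (Complex.I * m * τ)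
  have hk : IntervalIntegrable k volume (-π) π :=
    IntervalIntegrable.mul_continuousOn ⟨hint.1.ofReal, hint.2.ofReal⟩ (by fun_prop)
  have hk' : IntervalIntegrable (fun τ => k (-τ)) volume (-π) π := by
    simpa using ((IntervalIntegrable.iff_comp_neg (by finiteness)).1 hk).symm
  have hreflect : ∫ τ in (-π)..π, k (-τ) = ∫ τ in (-π)..π, k τ := by
    rw [intervalIntegral.integral_comp_neg, neg_neg]
  have hsum : ∫ τ in (-π)..π, (k τ + k (-τ))
      = 2 * ((∫ τ in (-π)..π, cos (m * τ) * h τ : ℝ) : ℂ) := by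
    rw [← intervalIntegral.integral_ofReal, ← intervalIntegral.integral_const_mul]
    congr! 1
    ext τ
    simp only [k, heven τ]
    push_cast
    rw [Complex.cos]
    ring_nf
  rw [intervalIntegral.integral_add hk hk', hreflect] at hsum
  linear_combination hsum / 2

lemma integral_comp_sub_mul_exp {h : ℝ → ℝ} (hint : IntervalIntegrable h volume (-π) π)
    (heven : Function.Even h) (hper : Function.Periodic h (2 * π)) (m : ℕ) (φ : ℝ) :
    ∫ t in (0 : ℝ)..2 * π, (h (t - φ) : ℂ) * Complex.exp (Complex.I * m * t)
      = ((∫ τ in (-π)..π, cos (m * τ) * h τ : ℝ) : ℂ) * Complex.exp (Complex.I * m * φ) := by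
  have hper' : Function.Periodic
      (fun τ : ℝ => (h τ : ℂ) * Complex.exp (Complex.I * m * τ)) (2 * π) := fun τ => by
    have hexp : Complex.I * m * ((τ + 2 * π : ℝ) : ℂ)
        = Complex.I * m * τ + m * (2 * π * Complex.I) := by push_cast; ring
    simp only [hper τ, hexp, Complex.exp_add, Complex.exp_nat_mul_two_pi_mul_I, mul_one]
  have hshift (t : ℝ) : (h (t - φ) : ℂ) * Complex.exp (Complex.I * m * t)
      = (h (t - φ) : ℂ) * Complex.exp (Complex.I * m * (t - φ : ℝ))
        * Complex.exp (Complex.I * m * φ) := by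
    rw [mul_assoc (h (t - φ) : ℂ), ← Complex.exp_add]
    push_cast
    ring_nf
  simp only [hshift]
  rw [intervalIntegral.integral_mul_const, ← integral_mul_exp_eq_integral_cos_mul hint heven,
    intervalIntegral.integral_comp_sub_right
      (fun τ : ℝ => (h τ : ℂ) * Complex.exp (Complex.I * m * τ)) φ]
  have := hper'.intervalIntegral_add_eq (0 - φ) (-π)
  congr 1
  convert this using 2 <;> ring

lemma intervalIntegrable_integral_mul_sin_mul {f : ℝ → ℝ} {K : ℝ → ℝ → ℝ} (hf : Continuous f)
    (hK : ContinuousOn (fun z : ℝ × ℝ => K z.1 z.2) angleRect) :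
    IntervalIntegrable (fun τ => ∫ θ in (0 : ℝ)..π, f θ * sin θ * K θ τ) volume (-π) π := by
  have hint : IntegrableOn (fun z : ℝ × ℝ => f z.1 * sin z.1 * K z.1 z.2) angleRect :=
    ContinuousOn.integrableOn_compact isCompact_angleRect (ContinuousOn.mul (by fun_prop) hK)
  rw [angleRect, IntegrableOn, Measure.volume_eq_prod, ← Measure.prod_restrict] at hint
  simp only [intervalIntegral.integral_of_le pi_pos.le, ← integral_Icc_eq_integral_Ioc]
  rw [intervalIntegrable_iff_integrableOn_Icc_of_le (by linarith [pi_pos])]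
  exact hint.integral_prod_right

lemma modeIntegral_eq_integral_cos_mul {f : ℝ → ℝ} {K : ℝ → ℝ → ℝ} (hf : Continuous f)
    (hK : ContinuousOn (fun z : ℝ × ℝ => K z.1 z.2) angleRect) (m : ℕ) :
    modeIntegral m f K
      = ∫ τ in (-π)..π, cos (m * τ) * ∫ θ in (0 : ℝ)..π, f θ * sin θ * K θ τ := by
  rw [modeIntegral, integral_angleRect_symm (integrableOn_mode_mul hf m hK),
    intervalIntegral.integral_of_le (by linarith [pi_pos]), integral_Icc_eq_integral_Ioc]
  simp only [intervalIntegral.integral_of_le pi_pos.le, ← integral_Icc_eq_integral_Ioc,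
    ← integral_const_mul]
  congr! 4
  ring

lemma modeFlux_const_mul (A β : ℝ) (m : ℕ) (c : ℝ) (f : ℝ → ℝ) (η : ℝ) :
    modeFlux A β m (fun θ => c * f θ) η = c * modeFlux A β m f η := by
  simp only [modeFlux, modeIntegral, mul_assoc, integral_const_mul]
  ring

lemma doubleLayerP_eq_modeFlux {a e b η : ℝ} (ha : 0 < a) (he : 0 < e) (hb : b ∈ Set.Ioo 0 π)
    (hη : e < η) {f : ℝ → ℝ} (hf : Continuous f) {m : ℕ} {μ : ℝ → ℝ → ℂ}
    (hμ : ∀ θ ∈ Set.Icc 0 π, ∀ t : ℝ, μ (cos θ) t = f θ * Complex.exp (Complex.I * m * t)) (φ : ℝ) :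
    doubleLayerP a (cosh η) μ (prolate a (cosh e) (cos b) φ)
      = ((modeFlux (cosh e * cos b) (sinh e * sin b) m f η / (4 * π) : ℝ) : ℂ)
        * Complex.exp (Complex.I * m * φ) := by
  set K := newtonKernelη (cosh e * cos b) (sinh e * sin b) η with hK_def
  have hη₀ : 0 < η := he.trans hη
  have hK : ContinuousOn (fun z : ℝ × ℝ => K z.1 z.2) angleRect :=
    continuousOn_newtonKernelη fun z hz =>
      distSq_pos he hb (by rw [abs_of_pos hη₀]; exact hη.ne') hz
  set H : ℝ → ℝ := fun τ => ∫ θ in (0 : ℝ)..π, f θ * sin θ * K θ τ with hH_def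
  have hinner (t : ℝ) : ∫ s in (-1 : ℝ)..1,
      ((((inner ℝ (unitNormalP a (cosh η) s t)
            (prolate a (cosh e) (cos b) φ - prolate a (cosh η) s t) : ℝ) /
          (4 * π * ‖prolate a (cosh e) (cos b) φ - prolate a (cosh η) s t‖ ^ 3))
        * areaElemP a (cosh η) s : ℝ) : ℂ) * μ s t
      = ((sinh η / (4 * π) : ℝ) : ℂ) * ((H (t - φ) : ℂ) * Complex.exp (Complex.I * m * t)) := by
    rw [← integral_sin_smul_comp_cos, hH_def, ← intervalIntegral.integral_ofReal,
      ← intervalIntegral.integral_mul_const, ← intervalIntegral.integral_const_mul]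
    refine intervalIntegral.integral_congr fun θ hθ => ?_
    rw [Set.uIcc_of_le pi_pos.le] at hθ
    simp only [doubleLayer_kernel_mul_areaElemP he.le (Set.Ioo_subset_Icc_self hb) φ t ha hη₀ hθ,
      hμ θ hθ, Complex.real_smul]
    push_cast
    ring
  have heven : Function.Even H := fun τ => by
    simp only [hH_def, hK_def, newtonKernelη, distSq, distSqη, cos_neg]
  have hper : Function.Periodic H (2 * π) := fun τ => by
    simp only [hH_def, hK_def, newtonKernelη, distSq, distSqη, cos_add_two_pi]
  rw [doubleLayerP]
  simp only [hinner]
  rw [intervalIntegral.integral_const_mul,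
    integral_comp_sub_mul_exp (intervalIntegrable_integral_mul_sin_mul hf hK) heven hper,
    ← modeIntegral_eq_integral_cos_mul hf hK, modeFlux]
  push_cast
  ring

end Assembly

theorem doubleLayer_interior_eval (a : ℝ) (ha : 0 < a) (u₀ : ℝ) (hu₀ : 1 < u₀)
    (n m : ℕ) (hm : m ≤ n) (u v φ : ℝ) (hu1 : 1 < u) (hu2 : u < u₀)
    (hv : v ∈ Set.Ioo (-1 : ℝ) 1) :
    doubleLayerP a u₀ (fun s t => sphY n m s t) (prolate a u v φ) =
      (((((n - m).factorial : ℝ) / ((n + m).factorial : ℝ)) * (-1 : ℝ) ^ m * (u₀ ^ 2 - 1) *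
          deriv (assocQ n m) u₀ * assocP n m u : ℝ) : ℂ) * sphY n m v φ := by
  obtain ⟨e, he, rfl⟩ : ∃ e, 0 < e ∧ cosh e = u := ⟨arcosh u, arcosh_pos hu1, cosh_arcosh hu1.le⟩
  obtain ⟨η, hη₀, rfl⟩ : ∃ η, 0 < η ∧ cosh η = u₀ :=
    ⟨arcosh u₀, arcosh_pos hu₀, cosh_arcosh hu₀.le⟩
  obtain ⟨b, hb, rfl⟩ : ∃ b ∈ Set.Ioo 0 π, cos b = v :=
    ⟨arccos v, ⟨arccos_pos.2 hv.2, arccos_lt_pi.2 hv.1⟩, cos_arccos hv.1.le hv.2.le⟩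
  have hη : e < η := by rwa [cosh_lt_cosh, abs_of_pos he, abs_of_pos hη₀] at hu2
  set c := √((2 * n + 1) / (4 * π)) * √((n - m).factorial / (n + m).factorial)
  have hY : ∀ θ ∈ Set.Icc 0 π, ∀ t : ℝ, sphY n m (cos θ) t
      = ((c * angularMode n m θ : ℝ) : ℂ) * Complex.exp (Complex.I * m * t) := fun θ hθ t => by
    rw [sphY, ferrersP_cos n m hθ]
  have hsinh : sinh η ≠ 0 := (sinh_pos_iff.2 hη₀).ne'
  rw [doubleLayerP_eq_modeFlux ha he hb hη
      ((isAngularMode_angularMode n m).contDiff.continuous.const_mul c) hY, modeFlux_const_mul,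
    modeFlux_angularMode_eq hm he hb hη, hY b (Set.Ioo_subset_Icc_self hb),
    deriv_assocQ_cosh n m hη₀, assocP_cosh n m he.le, ← sinh_sq,
    ← mul_assoc (Complex.ofReal _), ← Complex.ofReal_mul]
  congr 2
  field_simp
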